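/- arXiv:math/0306228 — 2 statements merged into one kernel-verified Lean document; each statement's English description precedes it below -/
import Mathlib

section
/- If A_1, ..., A_k are affine hyperplane arrangements such that each cone cA_i is free, then the cone c(A_1 ⊕ A_2 ⊕ ... ⊕ A_k) of their direct sum (product) is also free. -/
/-!
For an affine arrangement `A`, write `S` for the polynomial ring of the cone, `x₀` for the
homogenizing variable, and `D₀(cA)` for the derivations in `D(cA)` that annihilate `x₀`.  The Euler
derivation `θ` belongs to `D(cA)`, and `D(cA) = S θ ⊕ D₀(cA)` (`eulerSplit`; in coordinates `D₀(cA)`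
is the module `coneSyz A`).

Consequently `cA` is free if and only if `D₀(cA)` is free.  The nontrivial implication uses the
grading: `D₀(cA)` is a graded submodule of a free module, and `free_of_free_prod` shows that for such
a module `N` freeness of `S × N` implies freeness of `N`, by a graded Nakayama argument and the fact
that `d` generators of a free module of rank `d` over a commutative ring form a basis.

For a direct sum, the condition imposed by a hyperplane of the `i`-th factor involves only the
coordinates of that factor, so `D₀(c(A₁ ⊕ ⋯ ⊕ A_k))` is the product of the modules `D₀(cA_i)` with
scalars extended to the polynomial ring of the product space (`coneSyzDirectSum`).  That ring is free
over the polynomial ring of `cA_i`, hence the scalar extensions are free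
(`syz_free_baseChange`, `piece_free`).
-/

open MvPolynomial
open scoped Classical

/-- The module of logarithmic derivations `D(A)` of an arrangement given by a
finite set `A` of polynomials in variables `σ`. -/
noncomputable def arrDerivG (σ : Type*) (K : Type*) [Field K]
    (A : Finset (MvPolynomial σ K)) :
    Submodule (MvPolynomial σ K) (Derivation K (MvPolynomial σ K) (MvPolynomial σ K)) where
  carrier := {δ | ∀ α ∈ A, α ∣ δ α}
  add_mem' := by
    intro a b ha hb α hα
    simpa using dvd_add (ha α hα) (hb α hα)
  zero_mem' := by intro α hα; simp
  smul_mem' := by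
    intro c δ hδ α hα
    simpa using Dvd.dvd.mul_left (hδ α hα) c

/-- An affine arrangement: each defining polynomial has degree at most one, with
nonzero linear part. -/
def IsAffineArrangement (σ : Type*) (K : Type*) [Field K]
    (A : Finset (MvPolynomial σ K)) : Prop :=
  ∀ q ∈ A, q.totalDegree ≤ 1 ∧ q - C (constantCoeff q) ≠ 0

/-- The cone of an affine hyperplane: the affine hyperplane `{q = 0}`,
`q = α + c` with `α` linear and `c` constant, is homogenized to the linear
hyperplane `{α + c·x₀ = 0}` in one more variable (`x₀ = X none`). -/
noncomputable def coneForm {σ : Type*} {K : Type*} [Field K]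
    (q : MvPolynomial σ K) : MvPolynomial (Option σ) K :=
  rename some (q - C (constantCoeff q)) + C (constantCoeff q) * X none

/-- The cone `cA` of an affine arrangement `A`: the cones of its hyperplanes
together with the hyperplane at infinity `{x₀ = 0}`. -/
noncomputable def coneArr {σ : Type*} {K : Type*} [Field K] [DecidableEq σ]
    (A : Finset (MvPolynomial σ K)) : Finset (MvPolynomial (Option σ) K) :=
  A.image coneForm ∪ {X none}

/-! ### Generalized syzygy modules and base change -/

/-- The vectors `v` such that `f p` divides the linear combination `∑ j, c p j * v j` for every
`p ∈ B`.  For linear forms `f p` with coefficients `c p j`, these are the coordinate vectors of the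
derivations preserving every hyperplane `f p = 0`. -/
def syz {R J P : Type*} [CommRing R] [Fintype J] (B : Finset P) (f : P → R) (c : P → J → R) :
    Submodule R (J → R) where
  carrier := {v | ∀ p ∈ B, f p ∣ ∑ j, c p j * v j}
  add_mem' := by
    intro a b ha hb p hp
    simpa [mul_add, Finset.sum_add_distrib] using dvd_add (ha p hp) (hb p hp)
  zero_mem' := by intro p hp; simp
  smul_mem' := by
    intro r v hv p hp
    have := Dvd.dvd.mul_left (hv p hp) r
    simpa [Finset.mul_sum, mul_left_comm] using this

/-- If `T` is free over `R`, an `R`-basis of `syz B f c` is also a `T`-basis of the corresponding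
module over `T`: divisibility by an element of `R` can be tested on the coordinates with respect to
an `R`-basis of `T`, so vectors over `T` decompose into vectors over `R`. -/
theorem syz_free_baseChange {R T J P : Type*} [CommRing R] [CommRing T] [Algebra R T]
    [Module.Free R T] [Fintype J] (B : Finset P) (f : P → R) (c : P → J → R)
    (h : Module.Free R (syz B f c)) :
    Module.Free T (syz B (fun p => algebraMap R T (f p)) (fun p j => algebraMap R T (c p j))) := by
  set M := syz B (fun p => algebraMap R T (f p)) (fun p j => algebraMap R T (c p j)) with hM
  let m := Module.Free.chooseBasis R T
  let b := Module.Free.chooseBasis R (syz B f c)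
  have hcoord : ∀ k (r : R) (t : T), m.coord k (algebraMap R T r * t) = r * m.coord k t := by
    intro k r t
    rw [← Algebra.smul_def, map_smul, smul_eq_mul]
  let ext : syz B f c →ₗ[R] M :=
    { toFun := fun w => ⟨fun j => algebraMap R T (w.1 j), by
        intro p hp
        have := map_dvd (algebraMap R T) (w.2 p hp)
        simpa [map_sum] using this⟩
      map_add' := by intro x y; ext j; simp
      map_smul' := by intro r x; ext j; simp [Algebra.smul_def] }
  have hext : ∀ w j, (ext w).1 j = algebraMap R T (w.1 j) := fun _ _ => rfl
  refine Module.Free.of_basis (Module.Basis.mk (v := fun i => ext (b i)) ?_ ?_)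
  · rw [linearIndependent_iff']
    intro s g hg i hi
    refine m.ext_elem_iff.2 fun k => ?_
    have h0 : ∑ i ∈ s, m.coord k (g i) • b i = 0 := by
      ext j
      have h1 : (∑ i ∈ s, g i • ext (b i)).1 j = 0 := by rw [hg]; rfl
      have h2 := congrArg (m.coord k) h1
      simp only [Submodule.coe_sum, Finset.sum_apply, Submodule.coe_smul, Pi.smul_apply,
        smul_eq_mul, map_sum, map_zero, hext] at h2 ⊢
      simp only [mul_comm (g _), hcoord] at h2
      simpa [mul_comm] using h2
    have := linearIndependent_iff'.1 b.linearIndependent s _ h0 i hi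
    simpa using this
  · have hspan : ∀ w, ext w ∈ Submodule.span T (Set.range fun i => ext (b i)) := by
      intro w
      have : (⊤ : Submodule R (syz B f c)) ≤
          ((Submodule.span T (Set.range fun i => ext (b i))).restrictScalars R).comap ext := by
        rw [← b.span_eq, Submodule.span_le]
        rintro _ ⟨i, rfl⟩
        exact Submodule.subset_span ⟨i, rfl⟩
      exact this trivial
    rintro v -
    have hw : ∀ k, (fun j => m.coord k (v.1 j)) ∈ syz B f c := by
      intro k p hp
      obtain ⟨t, ht⟩ := v.2 p hp
      refine ⟨m.coord k t, ?_⟩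
      rw [← hcoord, ← ht, map_sum]
      simp only [hcoord]
    have hv : v = ∑ k ∈ Finset.univ.biUnion (fun j => (m.repr (v.1 j)).support),
        m k • ext ⟨_, hw k⟩ := by
      ext j
      simp only [Submodule.coe_sum, Finset.sum_apply, Submodule.coe_smul, Pi.smul_apply,
        smul_eq_mul, hext]
      conv_lhs => rw [← m.linearCombination_repr (v.1 j)]
      rw [Finsupp.linearCombination_apply, Finsupp.sum_of_support_subset _
        (Finset.subset_biUnion_of_mem (fun j => (m.repr (v.1 j)).support) (Finset.mem_univ j))]
      · simp [Algebra.smul_def, mul_comm]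
      · simp
    rw [hv]
    exact Submodule.sum_mem _ fun k _ => Submodule.smul_mem _ _ (hspan _)

/-- A polynomial ring is free over the polynomial ring in a subset of its variables. -/
theorem free_rename {K α β : Type*} [CommRing K] (f : α → β) (hf : Function.Injective f) :
    letI := (rename f : MvPolynomial α K →ₐ[K] MvPolynomial β K).toRingHom.toAlgebra
    Module.Free (MvPolynomial α K) (MvPolynomial β K) := by
  let _ := (rename f : MvPolynomial α K →ₐ[K] MvPolynomial β K).toRingHom.toAlgebra
  -- Regard `MvPolynomial β K` as polynomials in the variables outside the range of `f`.
  let e : (↥(Set.range f)ᶜ) ⊕ α ≃ β :=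
    (Equiv.sumComm _ _).trans (((Equiv.ofInjective f hf).sumCongr (Equiv.refl _)).trans
      (Equiv.Set.sumCompl (Set.range f)))
  have he : ∀ a, e (Sum.inr a) = f a := by intro a; simp [e]
  let F : MvPolynomial (↥(Set.range f)ᶜ) (MvPolynomial α K) ≃+* MvPolynomial β K :=
    ((sumAlgEquiv K _ _).symm.trans (renameEquiv K e)).toRingEquiv
  have hF : ∀ p, F (C p) = rename f p := by
    intro p
    have h : ((sumAlgEquiv K (↥(Set.range f)ᶜ) α).symm.trans (renameEquiv K e)).toAlgHom.comp
      ((sumAlgEquiv K (↥(Set.range f)ᶜ) α).toAlgHom.comp (rename Sum.inr)) = rename f := by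
      ext a; simp [he]
    rw [sumAlgEquiv_comp_rename_inr] at h
    exact DFunLike.congr_fun h p
  let G : MvPolynomial (↥(Set.range f)ᶜ) (MvPolynomial α K) ≃ₗ[MvPolynomial α K]
      MvPolynomial β K :=
    { F.toAddEquiv with
      map_smul' := by
        intro r x
        change F (r • x) = rename f r * F x
        rw [smul_eq_C_mul, map_mul, hF] }
  exact Module.Free.of_equiv G

/-! ### Homogeneous components and graded Nakayama -/

theorem hc_mul {σ K : Type*} [Field K] {s : MvPolynomial σ K} {a : ℕ} (hs : s.IsHomogeneous a)
    (p : MvPolynomial σ K) (e : ℕ) :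
    homogeneousComponent e (s * p) = if a ≤ e then s * homogeneousComponent (e - a) p else 0 := by
  have key : ∀ i, homogeneousComponent e (s * homogeneousComponent i p) =
      if a + i = e then s * homogeneousComponent i p else 0 := by
    intro i
    have := homogeneousComponent_of_mem (m := e) (n := a + i)
      (hs.mul (homogeneousComponent_isHomogeneous i p))
    rw [this]
    simp only [eq_comm]
  conv_lhs => rw [← sum_homogeneousComponent p, Finset.mul_sum, map_sum]
  simp only [key]
  split_ifs with h
  · have : ∀ i, (a + i = e) ↔ (i = e - a) := by intro i; omega
    simp only [this, Finset.sum_ite_eq', Finset.mem_range]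
    split_ifs with h'
    · rfl
    · rw [homogeneousComponent_eq_zero _ _ (by omega), mul_zero]
  · refine Finset.sum_eq_zero fun i _ => if_neg (by omega)

theorem dvd_hc {σ K : Type*} [Field K] {s : MvPolynomial σ K} {a : ℕ} (hs : s.IsHomogeneous a)
    {p : MvPolynomial σ K} (h : s ∣ p) (e : ℕ) : s ∣ homogeneousComponent e p := by
  obtain ⟨t, rfl⟩ := h
  rw [hc_mul hs]
  split_ifs
  · exact dvd_mul_right _ _
  · exact dvd_zero _

/-- The degree `e` homogeneous component of a vector of polynomials, taken coordinatewise. -/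
noncomputable def homComp {σ K : Type*} [Field K] (J : Type*) (e : ℕ) :
    (J → MvPolynomial σ K) →ₗ[K] (J → MvPolynomial σ K) :=
  (homogeneousComponent e).compLeft J

theorem homComp_apply {σ K J : Type*} [Field K] (e : ℕ) (v : J → MvPolynomial σ K) (j : J) :
    homComp J e v j = homogeneousComponent e (v j) := rfl

theorem homComp_smul {σ K J : Type*} [Field K] (e : ℕ) (s : MvPolynomial σ K)
    (v : J → MvPolynomial σ K) :
    homComp J e (s • v) = ∑ a ∈ Finset.range (s.totalDegree + 1),
      if a ≤ e then homogeneousComponent a s • homComp J (e - a) v else 0 := by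
  ext1 j
  rw [Finset.sum_apply, homComp_apply, Pi.smul_apply, smul_eq_mul]
  conv_lhs => rw [← sum_homogeneousComponent s, Finset.sum_mul, map_sum]
  refine Finset.sum_congr rfl fun a _ => ?_
  rw [hc_mul (homogeneousComponent_isHomogeneous a s)]
  split_ifs <;> rfl

theorem exists_sum_homComp {σ K J : Type*} [Field K] [Fintype J] (v : J → MvPolynomial σ K) :
    ∃ n, v = ∑ e ∈ Finset.range n, homComp J e v := by
  refine ⟨Finset.univ.sup (fun j => (v j).totalDegree) + 1, ?_⟩
  ext1 j
  rw [Finset.sum_apply]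
  conv_lhs => rw [← sum_homogeneousComponent (v j)]
  refine Finset.sum_subset ?_ ?_
  · intro a ha
    have := Finset.le_sup (f := fun j => (v j).totalDegree) (Finset.mem_univ j)
    simp only [Finset.mem_range] at ha ⊢
    omega
  · intro a _ ha
    rw [Finset.mem_range] at ha
    exact homogeneousComponent_eq_zero _ _ (by omega)

/-- Graded Nakayama lemma for the maximal ideal of the origin: the degree `e` component of an element
of `N` is the sum of an element of `L` and a combination of lower-degree components of elements of
`N`, so induction on `e` applies.  Only `L` has to be graded. -/
theorem graded_nakayama {σ J K : Type*} [Field K] [Fintype J]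
    {N L : Submodule (MvPolynomial σ K) (J → MvPolynomial σ K)}
    (hL : ∀ v ∈ L, ∀ e, homComp J e v ∈ L)
    (h : N ≤ L ⊔ RingHom.ker (constantCoeff : MvPolynomial σ K →+* K) • N) : N ≤ L := by
  have key : ∀ e, ∀ v ∈ N, homComp J e v ∈ L := by
    intro e
    induction e using Nat.strong_induction_on with
    | _ e ih =>
    intro v hv
    obtain ⟨l, hl, w, hw, rfl⟩ := Submodule.mem_sup.1 (h hv)
    rw [map_add]
    refine L.add_mem (hL l hl e) ?_
    refine Submodule.smul_induction_on hw ?_ ?_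
    · intro m hm n hn
      have hm0 : homogeneousComponent 0 m = 0 := by
        rw [homogeneousComponent_zero, ← constantCoeff_eq, RingHom.mem_ker.1 hm, map_zero]
      rw [homComp_smul]
      refine L.sum_mem fun a _ => ?_
      split_ifs with hae
      · rcases Nat.eq_zero_or_pos a with rfl | ha
        · rw [hm0, zero_smul]; exact L.zero_mem
        · exact L.smul_mem _ (ih _ (by omega) n hn)
      · exact L.zero_mem
    · intro a b ha hb
      rw [map_add]
      exact L.add_mem ha hb
  intro v hv
  obtain ⟨n, hn⟩ := exists_sum_homComp v
  rw [hn]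
  exact L.sum_mem fun e _ => key e v hv

/-- A submodule generated by homogeneous vectors is graded. -/
theorem span_homogeneous {σ J K ι : Type*} [Field K] (g : ι → J → MvPolynomial σ K)
    (hg : ∀ i, ∃ d, ∀ j, (g i j).IsHomogeneous d) :
    ∀ v ∈ Submodule.span (MvPolynomial σ K) (Set.range g), ∀ e,
      homComp J e v ∈ Submodule.span (MvPolynomial σ K) (Set.range g) := by
  intro v hv
  induction hv using Submodule.span_induction with
  | mem x hx =>
    intro e
    obtain ⟨i, rfl⟩ := hx
    obtain ⟨d, hd⟩ := hg i
    have : homComp J e (g i) = if e = d then g i else 0 := by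
      ext1 j
      rw [homComp_apply, homogeneousComponent_of_mem (hd j)]
      split_ifs <;> rfl
    rw [this]
    split_ifs
    · exact Submodule.subset_span ⟨i, rfl⟩
    · exact Submodule.zero_mem _
  | zero => intro e; rw [map_zero]; exact Submodule.zero_mem _
  | add x y _ _ hx hy => intro e; rw [map_add]; exact Submodule.add_mem _ (hx e) (hy e)
  | smul s x _ hx =>
    intro e
    rw [homComp_smul]
    refine Submodule.sum_mem _ fun a _ => ?_
    split_ifs
    · exact Submodule.smul_mem _ _ (hx _)
    · exact Submodule.zero_mem _

/-! ### Cancelling a free rank one summand of a graded module -/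

/-- A graded submodule `N` of a finite free module over `S = K[σ]` is free as soon as `S × N` is.
If `S × N` has rank `d`, its fibre at the origin is `K ^ d`, in which the image of `(1, 0)` does not
lie in the image of `N`.  Hence fewer than `d` homogeneous elements generate `N` by Nakayama, and
adding `(1, 0)` gives at most `d` generators of a free module of rank `d`, which must be linearly
independent. -/
theorem free_of_free_prod {σ J K : Type*} [Field K] [Finite σ] [Fintype J]
    {N : Submodule (MvPolynomial σ K) (J → MvPolynomial σ K)}
    (hN : ∀ v ∈ N, ∀ e, homComp J e v ∈ N)
    (hfree : Module.Free (MvPolynomial σ K) (MvPolynomial σ K × N)) :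
    Module.Free (MvPolynomial σ K) N := by
  set S := MvPolynomial σ K with hS
  let I : Ideal S := RingHom.ker (constantCoeff : MvPolynomial σ K →+* K)
  let b := Module.finBasis S (S × N)
  set d := Module.finrank S (S × N) with hd
  -- `Φ` is the quotient map onto the fibre of `S × N` at the origin.
  let Φ : S × N →ₗ[K] (Fin d → K) :=
    { toFun := fun x i => constantCoeff (b.repr x i)
      map_add' := by intro x y; ext i; simp
      map_smul' := by
        intro c x
        ext i
        have : c • x = (C c : S) • x := (algebraMap_smul S c x).symm
        simp only [this, map_smul]
        simp }
  have hΦ : ∀ x, Φ x = 0 → x.1 ∈ I ∧ (x.2 : J → S) ∈ I • N := by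
    intro x hx
    have hx' : ∀ i, b.repr x i ∈ I := fun i => congrFun hx i
    have h1 : x.1 = ∑ i, b.repr x i • (b i).1 := by
      conv_lhs => rw [← b.sum_repr x, Prod.fst_sum]
      rfl
    have h2 : (x.2 : J → S) = ∑ i, b.repr x i • ((b i).2 : J → S) := by
      conv_lhs => rw [← b.sum_repr x, Prod.snd_sum, Submodule.coe_sum]
      rfl
    constructor
    · rw [h1]
      exact I.sum_mem fun i _ => I.mul_mem_right _ (hx' i)
    · rw [h2]
      exact Submodule.sum_mem _ fun i _ => Submodule.smul_mem_smul (hx' i) (b i).2.2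
  let ψ : N →ₗ[K] (Fin d → K) := Φ ∘ₗ LinearMap.inr K S N
  have hψ : ∀ n, ψ n = Φ (0, n) := fun n => rfl
  have hu : Φ (1, 0) ∉ LinearMap.range ψ := by
    rintro ⟨n, hn⟩
    have h0 : Φ ((1, 0) - (0, n)) = 0 := by rw [map_sub, ← hn, hψ, sub_self]
    have h1 := (hΦ _ h0).1
    have : constantCoeff (1 : MvPolynomial σ K) = 0 := by simpa using RingHom.mem_ker.1 h1
    simp at this
  -- The images under `ψ` of homogeneous elements span the range of `ψ`.
  let H : Set (Fin d → K) := {y | ∃ n : N, (∃ e, ∀ j, (n.1 j).IsHomogeneous e) ∧ ψ n = y}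
  have hH : ∀ n, ψ n ∈ Submodule.span K H := by
    intro n
    obtain ⟨k, hk⟩ := exists_sum_homComp n.1
    have : n = ∑ e ∈ Finset.range k, (⟨homComp J e n.1, hN _ n.2 e⟩ : N) := by
      ext1
      rw [Submodule.coe_sum]
      exact hk
    rw [this, map_sum]
    exact Submodule.sum_mem _ fun e _ => Submodule.subset_span
      ⟨_, ⟨e, fun j => homogeneousComponent_isHomogeneous e _⟩, rfl⟩
  have hr : Module.finrank K (Submodule.span K H) < d := by
    have hle : Submodule.span K H ≤ LinearMap.range ψ := by
      rw [Submodule.span_le]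
      rintro _ ⟨n, -, rfl⟩
      exact ⟨n, rfl⟩
    have hlt : Submodule.span K H < ⊤ :=
      lt_of_le_of_lt hle (lt_top_iff_ne_top.2 fun h => hu (h ▸ Submodule.mem_top))
    simpa using Submodule.finrank_lt_finrank_of_lt hlt
  obtain ⟨f, hfH, hfspan, -⟩ := Submodule.exists_fun_fin_finrank_span_eq K H
  choose t ht htf using hfH
  have hspan : N ≤ Submodule.span S (Set.range fun i => (t i : J → S)) := by
    refine graded_nakayama (span_homogeneous _ ht) ?_
    intro n hn
    have h1 := hH ⟨n, hn⟩
    rw [← hfspan, Submodule.mem_span_range_iff_exists_fun] at h1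
    obtain ⟨c, hc⟩ := h1
    let l : N := ∑ i, c i • t i
    have hl : Φ ((0, ⟨n, hn⟩) - (0, l)) = 0 := by
      rw [map_sub, ← hψ, ← hψ, ← hc, map_sum, sub_eq_zero]
      exact Finset.sum_congr rfl fun i _ => by rw [map_smul, htf]
    have h2 := (hΦ _ hl).2
    refine Submodule.mem_sup.2 ⟨l, ?_, _, h2, by simp⟩
    rw [Submodule.coe_sum]
    refine Submodule.sum_mem _ fun i _ => ?_
    have : ((c i • t i : N) : J → S) = (algebraMap K S (c i)) • (t i : J → S) := by
      rw [algebraMap_smul]; rfl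
    rw [this]
    exact Submodule.smul_mem _ _ (Submodule.subset_span ⟨i, rfl⟩)
  have hspan' : ⊤ ≤ Submodule.span S (Set.range t) := by
    intro n _
    have h1 := hspan n.2
    rw [Submodule.mem_span_range_iff_exists_fun] at h1 ⊢
    obtain ⟨c, hc⟩ := h1
    exact ⟨c, by ext1; simpa using hc⟩
  let w : Option (Fin (Module.finrank K (Submodule.span K H))) → S × N :=
    fun o => o.elim (1, 0) (fun i => (0, t i))
  have hw : LinearIndependent S w := by
    refine linearIndependent_of_top_le_span_of_card_le_finrank ?_ (by simpa [← hd] using hr)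
    rintro ⟨s, n⟩ -
    have h1 : (s, n) = s • w none + LinearMap.inr S S N n := by simp [w]
    rw [h1]
    refine Submodule.add_mem _ (Submodule.smul_mem _ _ (Submodule.subset_span ⟨none, rfl⟩)) ?_
    have h2 : ⊤ ≤ (Submodule.span S (Set.range w)).comap (LinearMap.inr S S N) := by
      refine hspan'.trans (Submodule.span_le.2 ?_)
      rintro _ ⟨i, rfl⟩
      exact Submodule.subset_span ⟨some i, rfl⟩
    exact h2 trivial
  have ht' : LinearIndependent S t :=
    LinearIndependent.of_comp (LinearMap.inr S S N) (hw.comp some (Option.some_injective _))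
  exact Module.Free.of_basis (Module.Basis.mk ht' hspan')

/-! ### Splitting off the Euler derivation -/

/-- The coefficient of the variable `X j` in `q`. -/
noncomputable def linCoeff {σ K : Type*} [Field K] (q : MvPolynomial σ K) (j : σ) : K :=
  coeff (Finsupp.single j 1) q

theorem eq_sum_linCoeff {σ K : Type*} [Field K] [Fintype σ] {q : MvPolynomial σ K}
    (hq : q.totalDegree ≤ 1) :
    q - C (constantCoeff q) = ∑ j, C (linCoeff q j) * X j := by
  rw [sub_eq_iff_eq_add]
  ext d
  simp only [coeff_add, coeff_sum, coeff_C_mul, coeff_X, coeff_C, linCoeff]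
  by_cases h0 : d = 0
  · subst h0; simp [constantCoeff_eq]
  by_cases h1 : ∃ j, Finsupp.single j 1 = d
  · obtain ⟨j, rfl⟩ := h1
    have : ∀ i, (Finsupp.single i 1 = Finsupp.single j 1) ↔ i = j := by
      intro i; exact (Finsupp.single_left_injective (by norm_num : (1:ℕ) ≠ 0)).eq_iff
    simp [this, (Ne.symm h0)]
  · have hz : coeff d q = 0 := by
      apply coeff_eq_zero_of_totalDegree_lt
      refine lt_of_le_of_lt hq ?_
      by_contra! hle
      have hdeg : d.degree ≤ 1 := hle
      obtain ⟨j, hj⟩ := Finsupp.ne_iff.1 h0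
      apply h1
      refine ⟨j, ?_⟩
      have hj1 : Finsupp.single j 1 ≤ d := by
        rw [Finsupp.single_le_iff]; exact Nat.one_le_iff_ne_zero.2 hj
      obtain ⟨c, rfl⟩ := exists_add_of_le hj1
      rw [map_add, Finsupp.degree_single] at hdeg
      have : c = 0 := (Finsupp.degree_eq_zero_iff c).1 (by omega)
      simp [this]
    have hn : ∀ j, ¬ Finsupp.single j 1 = d := fun j hj => h1 ⟨j, hj⟩
    simp [hz, hn, Ne.symm h0]

theorem coneForm_eq {σ K : Type*} [Field K] [Fintype σ] {q : MvPolynomial σ K}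
    (hq : q.totalDegree ≤ 1) :
    coneForm q = ∑ j, C (linCoeff q j) * X (some j) + C (constantCoeff q) * X none := by
  simp [coneForm, eq_sum_linCoeff hq]

theorem coneForm_isHomogeneous {σ K : Type*} [Field K] [Fintype σ] {q : MvPolynomial σ K}
    (hq : q.totalDegree ≤ 1) : (coneForm q).IsHomogeneous 1 := by
  rw [coneForm_eq hq]
  refine IsHomogeneous.add (IsHomogeneous.sum _ _ _ fun j _ => ?_) ?_
  · simpa using (isHomogeneous_C _ (linCoeff q j)).mul (isHomogeneous_X K (some j))
  · simpa using (isHomogeneous_C _ (constantCoeff q)).mul (isHomogeneous_X K none)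

/-- For an affine arrangement `A`, the coordinate vectors of the derivations in `D(cA)` that
annihilate `x₀`.  The coordinate at `x₀`, which vanishes, is omitted. -/
noncomputable def coneSyz {σ K : Type*} [Field K] [Fintype σ] (A : Finset (MvPolynomial σ K)) :
    Submodule (MvPolynomial (Option σ) K) (σ → MvPolynomial (Option σ) K) :=
  syz A coneForm (fun q j => C (linCoeff q j))

theorem coneSyz_homComp {σ K : Type*} [Field K] [Fintype σ] {A : Finset (MvPolynomial σ K)}
    (hA : IsAffineArrangement σ K A) :
    ∀ v ∈ coneSyz A, ∀ e, homComp σ e v ∈ coneSyz A := by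
  intro v hv e q hq
  have := dvd_hc (coneForm_isHomogeneous (hA q hq).1) (hv q hq) e
  simpa [map_sum, homogeneousComponent_C_mul, homComp_apply] using this

theorem derivation_coneForm {σ K : Type*} [Field K] [Fintype σ] {q : MvPolynomial σ K}
    (hq : q.totalDegree ≤ 1)
    (δ : Derivation K (MvPolynomial (Option σ) K) (MvPolynomial (Option σ) K)) :
    δ (coneForm q) = ∑ j, C (linCoeff q j) * δ (X (some j)) + C (constantCoeff q) * δ (X none) := by
  rw [coneForm_eq hq]
  simp [map_sum, Derivation.leibniz]

theorem mem_arrDerivG_coneArr {σ K : Type*} [Field K] [DecidableEq σ]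
    {A : Finset (MvPolynomial σ K)}
    {δ : Derivation K (MvPolynomial (Option σ) K) (MvPolynomial (Option σ) K)} :
    δ ∈ arrDerivG (Option σ) K (coneArr A) ↔
      (∀ q ∈ A, coneForm q ∣ δ (coneForm q)) ∧ X none ∣ δ (X none) := by
  change (∀ α ∈ coneArr A, α ∣ δ α) ↔ _
  simp only [coneArr, Finset.mem_union, Finset.mem_image, Finset.mem_singleton]
  constructor
  · intro h
    exact ⟨fun q hq => h _ (Or.inl ⟨q, hq, rfl⟩), h _ (Or.inr rfl)⟩
  · rintro ⟨h1, h2⟩ α (⟨q, hq, rfl⟩ | rfl)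
    · exact h1 q hq
    · exact h2

/-- The derivation `s • θ + ∑ j, v j ∂_j`, where `θ` is the Euler derivation and the sum runs over the
variables other than `x₀`. -/
noncomputable def liftDeriv {σ K : Type*} [Field K]
    (s : MvPolynomial (Option σ) K) (v : σ → MvPolynomial (Option σ) K) :
    Derivation K (MvPolynomial (Option σ) K) (MvPolynomial (Option σ) K) :=
  mkDerivation K (fun o => o.elim (s * X none) (fun j => s * X (some j) + v j))

theorem liftDeriv_none {σ K : Type*} [Field K]
    (s : MvPolynomial (Option σ) K) (v : σ → MvPolynomial (Option σ) K) :
    liftDeriv s v (X none) = s * X none := by simp [liftDeriv]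

theorem liftDeriv_some {σ K : Type*} [Field K]
    (s : MvPolynomial (Option σ) K) (v : σ → MvPolynomial (Option σ) K) (j : σ) :
    liftDeriv s v (X (some j)) = s * X (some j) + v j := by simp [liftDeriv]

theorem liftDeriv_coneForm {σ K : Type*} [Field K] [Fintype σ] {q : MvPolynomial σ K}
    (hq : q.totalDegree ≤ 1)
    (s : MvPolynomial (Option σ) K) (v : σ → MvPolynomial (Option σ) K) :
    liftDeriv s v (coneForm q) = s * coneForm q + ∑ j, C (linCoeff q j) * v j := by
  rw [derivation_coneForm hq, coneForm_eq hq]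
  simp only [liftDeriv_none, liftDeriv_some, mul_add, Finset.sum_add_distrib, Finset.mul_sum,
    mul_left_comm s]
  ring

theorem liftDeriv_mem {σ K : Type*} [Field K] [Fintype σ] [DecidableEq σ]
    {A : Finset (MvPolynomial σ K)}
    (hA : IsAffineArrangement σ K A)
    (s : MvPolynomial (Option σ) K) (v : σ → MvPolynomial (Option σ) K) :
    liftDeriv s v ∈ arrDerivG (Option σ) K (coneArr A) ↔ v ∈ coneSyz A := by
  rw [mem_arrDerivG_coneArr, liftDeriv_none]
  constructor
  · rintro ⟨h, -⟩ q hq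
    have := h q hq
    rw [liftDeriv_coneForm (hA q hq).1] at this
    exact (dvd_add_right (dvd_mul_left _ _)).1 this
  · intro h
    refine ⟨fun q hq => ?_, dvd_mul_left _ _⟩
    rw [liftDeriv_coneForm (hA q hq).1]
    exact dvd_add (dvd_mul_left _ _) (h q hq)

/-- The decomposition `D(cA) = S θ ⊕ D₀`, where `θ` is the Euler derivation and `D₀` consists of the
elements annihilating `x₀`: a derivation `δ ∈ D(cA)` satisfies `δ x₀ = s x₀` for some `s`, and
`δ - s θ` annihilates `x₀`. -/
noncomputable def eulerSplit {σ K : Type*} [Field K] [Fintype σ] [DecidableEq σ]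
    {A : Finset (MvPolynomial σ K)}
    (hA : IsAffineArrangement σ K A) :
    (MvPolynomial (Option σ) K × coneSyz A) ≃ₗ[MvPolynomial (Option σ) K]
      arrDerivG (Option σ) K (coneArr A) :=
  LinearEquiv.ofBijective
    { toFun := fun x => ⟨liftDeriv x.1 x.2, (liftDeriv_mem hA _ _).2 x.2.2⟩
      map_add' := by
        intro x y
        ext1
        refine derivation_ext fun o => ?_
        cases o
        · simp [liftDeriv_none, add_mul]
        · simp [liftDeriv_some, add_mul]; ring
      map_smul' := by
        intro r x
        ext1
        refine derivation_ext fun o => ?_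
        cases o
        · simp [liftDeriv_none, mul_assoc]
        · simp [liftDeriv_some, mul_add, mul_assoc] } (by
    constructor
    · rintro ⟨s, v⟩ ⟨s', v'⟩ h
      have h' : liftDeriv s v.1 = liftDeriv s' v'.1 := congrArg Subtype.val h
      have hs : s = s' := by
        have := congrArg (fun δ => δ (X none)) h'
        simp only [liftDeriv_none] at this
        exact mul_right_cancel₀ (X_ne_zero _) this
      subst hs
      refine Prod.ext rfl (Subtype.ext (funext fun j => ?_))
      have := congrArg (fun δ => δ (X (some j))) h'
      simpa only [liftDeriv_some, add_right_inj] using this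
    · rintro ⟨δ, hδ⟩
      obtain ⟨s, hs⟩ := (mem_arrDerivG_coneArr.1 hδ).2
      have hl : liftDeriv s (fun j => δ (X (some j)) - s * X (some j)) = δ := by
        refine derivation_ext fun o => ?_
        cases o
        · rw [liftDeriv_none, hs, mul_comm]
        · rw [liftDeriv_some]; ring
      exact ⟨(s, ⟨_, (liftDeriv_mem hA _ _).1 (hl ▸ hδ)⟩), Subtype.ext hl⟩)

theorem coneSyz_free {σ K : Type*} [Field K] [Fintype σ] [DecidableEq σ]
    {A : Finset (MvPolynomial σ K)}
    (hA : IsAffineArrangement σ K A)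
    (h : Module.Free (MvPolynomial (Option σ) K) (arrDerivG (Option σ) K (coneArr A))) :
    Module.Free (MvPolynomial (Option σ) K) (coneSyz A) :=
  free_of_free_prod (coneSyz_homComp hA) (Module.Free.of_equiv (eulerSplit hA).symm)

/-! ### Direct sums -/

section sum
variable {K : Type*} [Field K] {k : ℕ} {n : Fin k → ℕ}

theorem coneForm_rename {σ τ : Type*} (f : σ → τ) (q : MvPolynomial σ K) :
    coneForm (rename f q) = rename (Option.map f) (coneForm q) := by
  have : constantCoeff (rename f q) = constantCoeff q := constantCoeff_rename f q
  simp only [coneForm, this, map_add, map_sub, map_mul, rename_C, rename_X, rename_rename,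
    Option.map_none]
  rfl

/-- The direct sum of the arrangements `A i`: the pullbacks of all their hyperplanes to the product
space. -/
noncomputable def directSum (A : ∀ i, Finset (MvPolynomial (Fin (n i)) K)) :
    Finset (MvPolynomial ((i : Fin k) × Fin (n i)) K) :=
  Finset.univ.biUnion (fun i =>
    (A i).image (rename (fun j => (⟨i, j⟩ : (i : Fin k) × Fin (n i)))))

theorem incl_injective (i : Fin k) :
    Function.Injective (fun j => (⟨i, j⟩ : (i : Fin k) × Fin (n i))) :=
  sigma_mk_injective (β := fun i => Fin (n i))

/-- The pullback of `q` from the `i`-th factor involves only the coordinates of that factor. -/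
theorem linCoeff_rename (i : Fin k) (q : MvPolynomial (Fin (n i)) K)
    (v : (i : Fin k) × Fin (n i) → MvPolynomial (Option ((i : Fin k) × Fin (n i))) K) :
    ∑ t, C (linCoeff (rename (fun j => (⟨i, j⟩ : (i : Fin k) × Fin (n i))) q) t) * v t =
      ∑ j, C (linCoeff q j) * v ⟨i, j⟩ := by
  rw [Fintype.sum_sigma, Finset.sum_eq_single i]
  · refine Finset.sum_congr rfl fun j _ => ?_
    congr 2
    have := coeff_rename_mapDomain (fun j => (⟨i, j⟩ : (i : Fin k) × Fin (n i)))
      (incl_injective i) q (Finsupp.single j 1)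
    rwa [Finsupp.mapDomain_single] at this
  · intro i' _ hi
    refine Finset.sum_eq_zero fun j _ => ?_
    have : linCoeff (rename (fun j => (⟨i, j⟩ : (i : Fin k) × Fin (n i))) q) ⟨i', j⟩ = 0 := by
      refine coeff_rename_eq_zero _ _ _ fun u hu => ?_
      exfalso
      have h1 := DFunLike.congr_fun hu ⟨i', j⟩
      rw [Finsupp.mapDomain_of_notMem_range, Finsupp.single_eq_same] at h1
      · exact zero_ne_one h1
      · rintro ⟨_, h⟩
        exact hi (congrArg Sigma.fst h).symm
    rw [this, map_zero, zero_mul]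
  · simp

theorem directSum_affine {A : ∀ i, Finset (MvPolynomial (Fin (n i)) K)}
    (haff : ∀ i, IsAffineArrangement (Fin (n i)) K (A i)) :
    IsAffineArrangement _ K (directSum A) := by
  intro q hq
  simp only [directSum, Finset.mem_biUnion, Finset.mem_image] at hq
  obtain ⟨i, -, q, hq, rfl⟩ := hq
  refine ⟨(totalDegree_rename_le _ _).trans (haff i q hq).1, ?_⟩
  rw [constantCoeff_rename]
  intro h
  apply (haff i q hq).2
  apply rename_injective _ (incl_injective i)
  simpa [rename_C] using h

/-- The part of `coneSyz (directSum A)` in the coordinates of the `i`-th factor; it is the extension of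
scalars of `coneSyz (A i)` to the polynomial ring of the product. -/
noncomputable def piece (A : ∀ i, Finset (MvPolynomial (Fin (n i)) K)) (i : Fin k) :
    Submodule (MvPolynomial (Option ((i : Fin k) × Fin (n i))) K)
      (Fin (n i) → MvPolynomial (Option ((i : Fin k) × Fin (n i))) K) :=
  syz (A i) (fun q => rename (Option.map (fun j => (⟨i, j⟩ : (i : Fin k) × Fin (n i)))) (coneForm q))
    (fun q j => C (linCoeff q j))

theorem mem_coneSyz_directSum {A : ∀ i, Finset (MvPolynomial (Fin (n i)) K)}
    {v : (i : Fin k) × Fin (n i) → MvPolynomial (Option ((i : Fin k) × Fin (n i))) K} :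
    v ∈ coneSyz (directSum A) ↔ ∀ i, (fun j => v ⟨i, j⟩) ∈ piece A i := by
  constructor
  · intro h i q hq
    have := h (rename (fun j => (⟨i, j⟩ : (i : Fin k) × Fin (n i))) q)
      (Finset.mem_biUnion.2 ⟨i, Finset.mem_univ _, Finset.mem_image_of_mem _ hq⟩)
    rwa [linCoeff_rename, coneForm_rename] at this
  · intro h q hq
    simp only [directSum, Finset.mem_biUnion, Finset.mem_image] at hq
    obtain ⟨i, -, q, hq, rfl⟩ := hq
    rw [linCoeff_rename, coneForm_rename]
    exact h i q hq

/-- A hyperplane of the direct sum only constrains the coordinates of its own factor, so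
`coneSyz (directSum A)` is the product of the pieces. -/
noncomputable def coneSyzDirectSum (A : ∀ i, Finset (MvPolynomial (Fin (n i)) K)) :
    (∀ i, piece A i) ≃ₗ[MvPolynomial (Option ((i : Fin k) × Fin (n i))) K]
      coneSyz (directSum A) where
  toFun w := ⟨fun t => (w t.1).1 t.2, mem_coneSyz_directSum.2 fun i => (w i).2⟩
  invFun v := fun i => ⟨fun j => v.1 ⟨i, j⟩, mem_coneSyz_directSum.1 v.2 i⟩
  map_add' _ _ := rfl
  map_smul' _ _ := rfl
  left_inv _ := rfl
  right_inv _ := rfl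

theorem piece_free (A : ∀ i, Finset (MvPolynomial (Fin (n i)) K)) (i : Fin k)
    (h : Module.Free (MvPolynomial (Option (Fin (n i))) K) (coneSyz (A i))) :
    Module.Free (MvPolynomial (Option ((i : Fin k) × Fin (n i))) K) (piece A i) := by
  let g : Option (Fin (n i)) → Option ((i : Fin k) × Fin (n i)) := Option.map (fun j => (⟨i, j⟩ : (i : Fin k) × Fin (n i)))
  let _ := (rename g : MvPolynomial _ K →ₐ[K] MvPolynomial _ K).toRingHom.toAlgebra
  have := free_rename (K := K) g (Option.map_injective (incl_injective i))
  have h2 := syz_free_baseChange (T := MvPolynomial (Option ((i : Fin k) × Fin (n i))) K) _ _ _ h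
  have e : piece A i = syz (A i)
      (fun q => algebraMap (MvPolynomial (Option (Fin (n i))) K)
        (MvPolynomial (Option ((i : Fin k) × Fin (n i))) K) (coneForm q))
      (fun q j => algebraMap (MvPolynomial (Option (Fin (n i))) K)
        (MvPolynomial (Option ((i : Fin k) × Fin (n i))) K) (C (linCoeff q j))) := by
    have : ∀ (q : MvPolynomial (Fin (n i)) K) j, (algebraMap (MvPolynomial (Option (Fin (n i))) K)
        (MvPolynomial (Option ((i : Fin k) × Fin (n i))) K) (C (linCoeff q j))) =
        C (linCoeff q j) := fun q j => rename_C g _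
    simp only [this]
    rfl
  rw [e]
  exact h2

end sum

/-- Let `A_1, …, A_k` be affine hyperplane arrangements (in
spaces `K^{n_1}, …, K^{n_k}`) such that each cone `cA_i` is free.  Then the cone
`c(A_1 ⊕ ⋯ ⊕ A_k)` of their direct sum — the arrangement in the product space
whose hyperplanes are the pullbacks of the hyperplanes of the `A_i` — is also
free. -/
theorem cone_of_direct_sum_free
    {K : Type*} [Field K] [CharZero K]
    {k : ℕ} (n : Fin k → ℕ)
    (A : ∀ i, Finset (MvPolynomial (Fin (n i)) K))
    (haff : ∀ i, IsAffineArrangement (Fin (n i)) K (A i))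
    (hfree : ∀ i, Module.Free (MvPolynomial (Option (Fin (n i))) K)
      (arrDerivG (Option (Fin (n i))) K (coneArr (A i)))) :
    Module.Free (MvPolynomial (Option ((i : Fin k) × Fin (n i))) K)
      (arrDerivG (Option ((i : Fin k) × Fin (n i))) K
        (coneArr (Finset.univ.biUnion (fun i =>
          (A i).image (rename (fun j => (⟨i, j⟩ : (i : Fin k) × Fin (n i)))))))) := by
  have (i : Fin k) : Module.Free (MvPolynomial (Option ((i : Fin k) × Fin (n i))) K) (piece A i) :=
    piece_free A i (coneSyz_free (haff i) (hfree i))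
  have : Module.Free (MvPolynomial (Option ((i : Fin k) × Fin (n i))) K)
      (coneSyz (directSum A)) := Module.Free.of_equiv (coneSyzDirectSum A)
  have h : Module.Free _ (arrDerivG _ K (coneArr (directSum A))) :=
    Module.Free.of_equiv (eulerSplit (directSum_affine haff))
  exact h
end

section
/- Let Φ_0 be a crystallographic root system of rank two (type A_2, B_2, or G_2) with Coxeter number h, and Ψ_0 ⊆ Φ_0^+ an order ideal in the root poset. Set e'_1 = 1, e'_2 = |Ψ_0| - 1 when Ψ_0 is nonempty. Then the characteristic polynomial of the affine arrangement A(Φ_0^+, Ψ_0, m) = {H_{α,j} : α ∈ Φ_0^+, 1-m ≤ j ≤ m} ∪ {H_{α,-m} : α ∈ Ψ_0} equals (t - e'_1 - mh)(t - e'_2 - mh). -/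
/-!
The characteristic polynomial is computed by adding lines one at a time: a line meeting the lines
already present in `N` points changes `χ` by `-t + N` (`incChi_insert`). Write `α, β` for a basis of
simple roots; in the coordinates `(x, y) = ((α, v), (β, v))` every hyperplane is an integral line
`a x + b y = j`, and the positive forms `(a, b)` are one of the lists `formsA`, `formsB`, `formsG`.

Start with all levels `1 - m ≤ j ≤ m`, for which `χ = (t - m h)²`. Add the levels `-m` in order of
increasing height: the first of these lines meets the others in `m h` points, every further one in
`m h + 1` points, and this gives `(t - 1 - m h) (t - (|Ψ₀| - 1) - m h)` for every order ideal. Once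
all levels from `-m` to `m` are present, adding the levels `m + 1` in order of decreasing height
leads to `(t - (m + 1) h)²`, which closes the induction on `m` (`StageFormula`). All determinants of
two forms divide `6`, so the intersection points on a line lie at multiples of `1 / 6` of the lattice
spacing and can be listed as unions of four arithmetic progressions (`positions`).

That these coordinates exist is the rank two classification (`classification`): choose two roots
that realize the largest Cartan product `K ∈ {1, 2, 3}`, generate the remaining roots by reflections,
and observe that a further root would violate the angle bounds given by `K`.

The set of positive roots is only required to be a choice of signs whose members are nonnegative
integral combinations of `Δ`. Either this choice has a basis of simple roots as above
(`StandardSigns`), or the cone it spans contains the negative of each of its members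
(`NonpointedSigns`); in the second case any two positive roots are comparable, hence `Ψ₀` consists of
all positive roots, each of them has the levels `-m, …, m`, and the signs do not matter.
-/

/-- The standard inner product on `ℝ^ℓ`. -/
noncomputable def rdot {ℓ : ℕ} (u v : Fin ℓ → ℝ) : ℝ := ∑ i, u i * v i

/-- A (reduced, crystallographic) root system in `ℝ^ℓ`: a finite set of nonzero
vectors, stable under the reflections in its members, with integral Cartan
numbers `⟨β, α^∨⟩ = 2(β,α)/(α,α)`, and containing no scalar multiple of a root
other than `±1` times it. -/
def IsRootSystem {ℓ : ℕ} (Φ : Finset (Fin ℓ → ℝ)) : Prop :=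
  (0 : Fin ℓ → ℝ) ∉ Φ ∧
  (∀ α ∈ Φ, ∀ β ∈ Φ, β - (2 * rdot β α / rdot α α) • α ∈ Φ) ∧
  (∀ α ∈ Φ, ∀ β ∈ Φ, ∃ z : ℤ, 2 * rdot β α / rdot α α = (z : ℝ)) ∧
  (∀ α ∈ Φ, ∀ c : ℝ, c • α ∈ Φ → c = 1 ∨ c = -1)

/-- Irreducibility of a root system: it admits no splitting into two nonempty
mutually orthogonal parts. -/
def IsIrreducibleRS {ℓ : ℕ} (Φ : Finset (Fin ℓ → ℝ)) : Prop :=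
  ¬ ∃ Φ₁ Φ₂ : Finset (Fin ℓ → ℝ), Φ = Φ₁ ∪ Φ₂ ∧ Φ₁.Nonempty ∧ Φ₂.Nonempty ∧
      ∀ α ∈ Φ₁, ∀ β ∈ Φ₂, rdot α β = 0

open MvPolynomial

open scoped Classical in
/-- The characteristic polynomial of an affine hyperplane arrangement (given by a
finite set of polynomials of degree at most one), via Whitney's formula:
`χ(A,t) = ∑_{B ⊆ A central} (-1)^{|B|} t^{n - rank B}`, the sum being over the
subsets `B` with nonempty intersection `∩_{H ∈ B} H ≠ ∅`, and `rank B` the rank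
of the family of linear parts of `B`. -/
noncomputable def charPolyAffine (n : ℕ) (K : Type*) [Field K]
    (A : Finset (MvPolynomial (Fin n) K)) : Polynomial ℤ :=
  ∑ B ∈ A.powerset,
    if ∃ v : Fin n → K, ∀ p ∈ B, eval v p = 0 then
      (-1 : ℤ) ^ B.card •
        ((Polynomial.X : Polynomial ℤ) ^
          (n - Module.finrank K (Submodule.span K
            ((B.image fun p => p - C (constantCoeff p)) : Set (MvPolynomial (Fin n) K)))))
    else 0

/-- The affine hyperplane `H_{α,j} = {v : (α,v) = j}` as a polynomial. -/
noncomputable def affForm {ℓ : ℕ} (α : Fin ℓ → ℝ) (j : ℤ) : MvPolynomial (Fin ℓ) ℝ :=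
  (∑ i, C (α i) * X i) - C (j : ℝ)

/-! ### Whitney sums of an incidence structure -/

open scoped Classical in
/-- The Whitney sum of a finite set `S` of pairwise distinct lines in a plane of points `P`, with
incidence relation `inc`. A central family of distinct lines has rank `min |B| 2`, which is why no
linear algebra appears here. -/
noncomputable def incChi {ι P : Type*} (inc : ι → P → Prop) (S : Finset ι) : Polynomial ℤ :=
  ∑ B ∈ S.powerset, if ∃ p, ∀ q ∈ B, inc q p then
    (-1 : ℤ) ^ B.card • (Polynomial.X : Polynomial ℤ) ^ (2 - min B.card 2) else 0

/-- Addition formula: adding a line `ℓ` changes the Whitney sum by `-X + N`, where `N` is the number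
of points in which `ℓ` meets the lines already present. -/
lemma incChi_insert {ι P : Type*} [DecidableEq ι] (inc : ι → P → Prop) (S : Finset ι) (ℓ : ι) (hℓ : ℓ ∉ S)
    (hne : ∃ p, inc ℓ p) (T : Finset P)
    (hT : ∀ p, p ∈ T ↔ inc ℓ p ∧ ∃ q ∈ S, inc q p)
    (huniq : ∀ q ∈ S, ∀ p p', inc ℓ p → inc q p → inc ℓ p' → inc q p' → p = p') :
    incChi inc (insert ℓ S) = incChi inc S - Polynomial.X + (T.card : Polynomial ℤ) := by
  classical
  unfold incChi
  rw [Finset.sum_powerset_insert hℓ]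
  have key : ∀ B ∈ S.powerset, (if ∃ p, ∀ q ∈ insert ℓ B, inc q p then
      (-1 : ℤ) ^ (insert ℓ B).card • (Polynomial.X : Polynomial ℤ) ^ (2 - min (insert ℓ B).card 2)
      else 0) = (if B = ∅ then -Polynomial.X + (T.card : Polynomial ℤ) else 0)
        + ∑ p ∈ T, if ∀ q ∈ B, inc q p then -(((-1 : ℤ) ^ B.card : ℤ) : Polynomial ℤ)
          else 0 := by
    intro B hB
    rw [Finset.mem_powerset] at hB
    have hlB : ℓ ∉ B := fun h => hℓ (hB h)
    rw [Finset.card_insert_of_notMem hlB]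
    rcases B.eq_empty_or_nonempty with rfl | hBne
    · have : ∃ p, ∀ q ∈ insert ℓ (∅ : Finset ι), inc q p := by
        obtain ⟨p, hp⟩ := hne
        exact ⟨p, by simpa using hp⟩
      rw [if_pos this]
      simp
    · rw [if_neg hBne.ne_empty, zero_add]
      obtain ⟨q₀, hq₀⟩ := hBne
      have hc : 2 - min (B.card + 1) 2 = 0 := by
        have := Finset.card_pos.mpr ⟨q₀, hq₀⟩
        omega
      rw [hc, pow_zero]
      split_ifs with hcen
      · obtain ⟨p, hp⟩ := hcen
        have hpl : inc ℓ p := hp ℓ (Finset.mem_insert_self _ _)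
        have hpB : ∀ q ∈ B, inc q p := fun q hq => hp q (Finset.mem_insert_of_mem hq)
        rw [Finset.sum_eq_single p]
        · rw [if_pos hpB]
          simp [pow_succ]
        · intro p' hp' hne'
          rw [if_neg]
          intro hall
          exact hne' (huniq q₀ (hB hq₀) p' p ((hT p').1 hp').1 (hall q₀ hq₀) hpl (hpB q₀ hq₀))
        · intro hpT
          exact absurd ((hT p).2 ⟨hpl, q₀, hB hq₀, hpB q₀ hq₀⟩) hpT
      · symm
        apply Finset.sum_eq_zero
        intro p hp
        rw [if_neg]
        intro hall
        refine hcen ⟨p, ?_⟩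
        intro q hq
        rcases Finset.mem_insert.1 hq with rfl | hq
        · exact ((hT p).1 hp).1
        · exact hall q hq
  rw [Finset.sum_congr rfl key, Finset.sum_add_distrib, Finset.sum_comm]
  -- For each intersection point, the nonempty families of lines through it contribute `1` in all.
  have inner : ∀ p ∈ T, (∑ B ∈ S.powerset, if ∀ q ∈ B, inc q p then
      -(((-1 : ℤ) ^ B.card : ℤ) : Polynomial ℤ) else 0) = 0 := by
    intro p hp
    obtain ⟨-, q, hq, hqp⟩ := (hT p).1 hp
    have h0 := Finset.sum_powerset_neg_one_pow_card_of_nonempty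
      (x := S.filter fun q => inc q p) ⟨q, Finset.mem_filter.2 ⟨hq, hqp⟩⟩
    rw [← Finset.sum_filter]
    have hfil : (S.powerset.filter fun B => ∀ q ∈ B, inc q p)
        = (S.filter fun q => inc q p).powerset := by
      ext B
      simp only [Finset.mem_filter, Finset.mem_powerset, Finset.subset_iff]
      exact ⟨fun h q hq => ⟨h.1 hq, h.2 q hq⟩, fun h => ⟨fun q hq => (h hq).1, fun q hq => (h hq).2⟩⟩
    rw [hfil]
    rw [Finset.sum_neg_distrib]
    rw [← Int.cast_sum, h0]
    simp
  rw [Finset.sum_congr rfl inner, Finset.sum_const_zero, add_zero, Finset.sum_ite_eq']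
  simp
  ring

/-! ### Deformations of a rank two arrangement in integral coordinates -/

/-- The real point `(x, y)` lies on the line `a x + b y = j` encoded by the key `(a, b, j)`. -/
def LineInc (q : ℤ × ℤ × ℤ) (p : ℝ × ℝ) : Prop :=
  (q.1 : ℝ) * p.1 + (q.2.1 : ℝ) * p.2 = (q.2.2 : ℝ)

/-- The determinant of two integral linear forms. -/
def idet (d e : ℤ × ℤ) : ℤ := d.1 * e.2 - d.2 * e.1

/-- The lines `d.1 x + d.2 y = j` with `d ∈ L` and `lo d ≤ j ≤ hi d`. -/
noncomputable def arr (L : Finset (ℤ × ℤ)) (lo hi : ℤ × ℤ → ℤ) : Finset (ℤ × ℤ × ℤ) :=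
  L.biUnion fun d => (Finset.Icc (lo d) (hi d)).image fun j => (d.1, d.2, j)

lemma mem_arr {L : Finset (ℤ × ℤ)} {lo hi : ℤ × ℤ → ℤ} {q : ℤ × ℤ × ℤ} :
    q ∈ arr L lo hi ↔ (q.1, q.2.1) ∈ L ∧ lo (q.1, q.2.1) ≤ q.2.2 ∧ q.2.2 ≤ hi (q.1, q.2.1) := by
  obtain ⟨a, b, j⟩ := q
  simp only [arr, Finset.mem_biUnion, Finset.mem_image, Finset.mem_Icc, Prod.mk.injEq]
  constructor
  · rintro ⟨⟨a', b'⟩, hd, j', hj, rfl, rfl, rfl⟩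
    exact ⟨hd, hj⟩
  · rintro ⟨hd, hj⟩
    exact ⟨(a, b), hd, j, hj, rfl, rfl, rfl⟩

/-- The integers `6 k + r` with `l ≤ k ≤ h`. -/
noncomputable def progr (r l h : ℤ) : Finset ℤ := (Finset.Icc l h).image fun k => 6 * k + r

lemma mem_progr {r l h t : ℤ} : t ∈ progr r l h ↔ ∃ k, l ≤ k ∧ k ≤ h ∧ t = 6 * k + r := by
  simp only [progr, Finset.mem_image, Finset.mem_Icc]
  constructor
  · rintro ⟨k, hk, rfl⟩; exact ⟨k, hk.1, hk.2, rfl⟩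
  · rintro ⟨k, h1, h2, rfl⟩; exact ⟨k, ⟨h1, h2⟩, rfl⟩

lemma card_progr (r l h : ℤ) (hl : l ≤ h + 1) : ((progr r l h).card : ℤ) = h + 1 - l := by
  rw [progr, Finset.card_image_of_injective _ (fun a b hab => by simpa using hab)]
  simp
  omega

/-- The positions, in units of `1/6`, of the intersection points on a fixed line: an interval of
integral points, one of half-integral points and two of points with denominator three. -/
noncomputable def positions (l₀ h₀ l₂ h₂ l₃ h₃ l₄ h₄ : ℤ) : Finset ℤ :=
  (progr 0 l₀ h₀ ∪ progr 2 l₂ h₂) ∪ (progr 3 l₃ h₃ ∪ progr 4 l₄ h₄)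

lemma mem_positions {l₀ h₀ l₂ h₂ l₃ h₃ l₄ h₄ t : ℤ} :
    t ∈ positions l₀ h₀ l₂ h₂ l₃ h₃ l₄ h₄ ↔
      (t % 6 = 0 ∧ 6 * l₀ ≤ t ∧ t ≤ 6 * h₀) ∨ (t % 6 = 2 ∧ 6 * l₂ + 2 ≤ t ∧ t ≤ 6 * h₂ + 2) ∨
      (t % 6 = 3 ∧ 6 * l₃ + 3 ≤ t ∧ t ≤ 6 * h₃ + 3) ∨
      (t % 6 = 4 ∧ 6 * l₄ + 4 ≤ t ∧ t ≤ 6 * h₄ + 4) := by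
  have aux : ∀ r l h : ℤ, 0 ≤ r → r < 6 →
      (t ∈ progr r l h ↔ (t % 6 = r ∧ 6 * l + r ≤ t ∧ t ≤ 6 * h + r)) := by
    intro r l h h0 h6
    rw [mem_progr]
    constructor
    · rintro ⟨k, h1, h2, rfl⟩; omega
    · rintro ⟨h1, h2, h3⟩; exact ⟨t / 6, by omega, by omega, by omega⟩
  simp only [positions, Finset.mem_union, aux _ _ _ (by norm_num : (0:ℤ) ≤ 0) (by norm_num),
    aux _ _ _ (by norm_num : (0:ℤ) ≤ 2) (by norm_num), aux _ _ _ (by norm_num : (0:ℤ) ≤ 3)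
    (by norm_num), aux _ _ _ (by norm_num : (0:ℤ) ≤ 4) (by norm_num), add_zero, or_assoc]

lemma card_positions {l₀ h₀ l₂ h₂ l₃ h₃ l₄ h₄ : ℤ} (k₀ : l₀ ≤ h₀ + 1) (k₂ : l₂ ≤ h₂ + 1)
    (k₃ : l₃ ≤ h₃ + 1) (k₄ : l₄ ≤ h₄ + 1) :
    ((positions l₀ h₀ l₂ h₂ l₃ h₃ l₄ h₄).card : ℤ)
      = (h₀ + 1 - l₀) + (h₂ + 1 - l₂) + (h₃ + 1 - l₃) + (h₄ + 1 - l₄) := by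
  have hd : ∀ r r' l h l' h' : ℤ, r % 6 ≠ r' % 6 → Disjoint (progr r l h) (progr r' l' h') := by
    intro r r' l h l' h' hr
    rw [Finset.disjoint_left]
    intro t ht ht'
    obtain ⟨k, -, -, rfl⟩ := mem_progr.1 ht
    obtain ⟨k', -, -, hk'⟩ := mem_progr.1 ht'
    omega
  rw [positions, Finset.card_union_of_disjoint, Finset.card_union_of_disjoint (hd _ _ _ _ _ _ _),
    Finset.card_union_of_disjoint (hd _ _ _ _ _ _ _)]
  · push_cast
    rw [card_progr _ _ _ k₀, card_progr _ _ _ k₂, card_progr _ _ _ k₃, card_progr _ _ _ k₄]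
    ring
  · norm_num
  · norm_num
  · rw [Finset.disjoint_union_left, Finset.disjoint_union_right, Finset.disjoint_union_right]
    refine ⟨⟨hd _ _ _ _ _ _ ?_, hd _ _ _ _ _ _ ?_⟩, ⟨hd _ _ _ _ _ _ ?_, hd _ _ _ _ _ _ ?_⟩⟩ <;>
      norm_num

/-- The Whitney sum of `S` is `X² - a X + b`. -/
def HasChi (S : Finset (ℤ × ℤ × ℤ)) (a b : ℤ) : Prop :=
  incChi LineInc S
    = Polynomial.X ^ 2 - Polynomial.C a * Polynomial.X + Polynomial.C b

/-- Two different members of `L` are independent, and their determinant divides `6`, so that the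
intersection points on each line occur at multiples of `1/6` of the lattice spacing. -/
def GoodForms (L : Finset (ℤ × ℤ)) : Prop :=
  (∀ d ∈ L, d ≠ (0, 0)) ∧ ∀ d ∈ L, ∀ e ∈ L, d ≠ e → idet d e ≠ 0 ∧ idet d e ∣ 6

instance (L : Finset (ℤ × ℤ)) : Decidable (GoodForms L) := by
  unfold GoodForms; infer_instance

/-- Addition of one line `d₀.1 x + d₀.2 y = j₀` through the lattice point `(x₀, y₀)`. The line is
parametrized by `t ↦ (x₀, y₀) + (t / 6) (d₀.2, -d₀.1)`, and `T` lists the parameters of the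
intersection points. -/
lemma hasChi_insert {L : Finset (ℤ × ℤ)} (hL : GoodForms L) {lo hi : ℤ × ℤ → ℤ}
    {d₀ : ℤ × ℤ} (hd₀ : d₀ ∈ L) {j₀ : ℤ} (hj₀ : j₀ < lo d₀ ∨ hi d₀ < j₀) {x₀ y₀ : ℤ}
    (hxy : d₀.1 * x₀ + d₀.2 * y₀ = j₀) {T : Finset ℤ}
    (hT : ∀ t, t ∈ T ↔ ∃ d ∈ L, d ≠ d₀ ∧
      6 * lo d ≤ 6 * (d.1 * x₀ + d.2 * y₀) + idet d d₀ * t ∧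
      6 * (d.1 * x₀ + d.2 * y₀) + idet d d₀ * t ≤ 6 * hi d ∧
      (6 ∣ idet d d₀ * t)) {a b : ℤ} (h : HasChi (arr L lo hi) a b) :
    HasChi (insert (d₀.1, d₀.2, j₀) (arr L lo hi)) (a + 1) (b + T.card) := by
  classical
  obtain ⟨u, v⟩ := d₀
  simp only [idet] at *
  have huv : (u : ℝ) ^ 2 + (v : ℝ) ^ 2 ≠ 0 := by
    have := hL.1 _ hd₀
    intro h0
    have hu : u = 0 := by
      have : (u : ℝ) = 0 := by nlinarith [sq_nonneg (u : ℝ), sq_nonneg (v : ℝ)]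
      exact_mod_cast this
    have hv : v = 0 := by
      have : (v : ℝ) = 0 := by nlinarith [sq_nonneg (u : ℝ), sq_nonneg (v : ℝ)]
      exact_mod_cast this
    exact this (by rw [hu, hv])
  have hxyR : (u : ℝ) * x₀ + v * y₀ = j₀ := by exact_mod_cast hxy
  let g : ℤ → ℝ × ℝ := fun t => ((x₀ : ℝ) + v * (t / 6), (y₀ : ℝ) - u * (t / 6))
  have hg : Function.Injective g := by
    intro t t' htt
    simp only [g, Prod.mk.injEq] at htt
    have : ((u : ℝ) ^ 2 + (v : ℝ) ^ 2) * ((t : ℝ) - t') = 0 := by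
      linear_combination 6 * (v : ℝ) * htt.1 - 6 * (u : ℝ) * htt.2
    have := (mul_eq_zero.1 this).resolve_left huv
    exact_mod_cast sub_eq_zero.1 this
  -- A line of the arrangement parallel to the new one is different from it, hence disjoint from it.
  have hpar : ∀ q ∈ arr L lo hi, ∀ p, LineInc (u, v, j₀) p → LineInc q p → (q.1, q.2.1) ≠ (u, v) := by
    rintro ⟨a, b, j⟩ hq p h1 h2 heq
    obtain ⟨-, hq2, hq3⟩ := mem_arr.1 hq
    simp only [Prod.mk.injEq] at heq
    obtain ⟨rfl, rfl⟩ := heq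
    simp only [LineInc] at h1 h2
    have : (j : ℝ) = j₀ := by rw [← h1, ← h2]
    have : j = j₀ := by exact_mod_cast this
    simp only at hq2 hq3
    omega
  have hmain : incChi LineInc (insert (u, v, j₀) (arr L lo hi))
      = incChi LineInc (arr L lo hi) - Polynomial.X + ((T.image g).card : Polynomial ℤ) := by
    apply incChi_insert
    · intro hmem
      obtain ⟨-, h1, h2⟩ := mem_arr.1 hmem
      simp only at h1 h2
      omega
    · exact ⟨(x₀, y₀), hxyR⟩
    · intro p
      rw [Finset.mem_image]
      constructor
      · rintro ⟨t, ht, rfl⟩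
        obtain ⟨⟨a, b⟩, hd, -, h1, h2, k, hk⟩ := (hT t).1 ht
        simp only at h1 h2 hk
        refine ⟨?_, (a, b, a * x₀ + b * y₀ + k), mem_arr.2 ⟨hd, ?_, ?_⟩, ?_⟩
        · simp only [LineInc, g]
          linear_combination hxyR
        · simp only; omega
        · simp only; omega
        · simp only [LineInc, g]
          have hk' : ((a : ℝ) * v - b * u) * t = 6 * k := by exact_mod_cast hk
          push_cast
          linear_combination hk' / 6
      · rintro ⟨hp, ⟨a, b, j⟩, hq, hqp⟩
        have hne := hpar _ hq p hp hqp
        obtain ⟨hq1, hq2, hq3⟩ := mem_arr.1 hq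
        simp only at hq1 hq2 hq3 hne
        obtain ⟨hdet, c, hc⟩ := hL.2 _ hq1 _ hd₀ hne
        simp only [idet] at hdet hc
        simp only [LineInc] at hp hqp
        have hcR : ((a : ℝ) * v - b * u) * c = 6 := by exact_mod_cast hc.symm
        have hdetR : (a : ℝ) * v - b * u ≠ 0 := by exact_mod_cast hdet
        have ht : (a * v - b * u) * (c * (j - a * x₀ - b * y₀)) = 6 * (j - a * x₀ - b * y₀) := by
          rw [← mul_assoc, ← hc]
        refine ⟨c * (j - a * x₀ - b * y₀), (hT _).2 ⟨(a, b), hq1, hne, ?_, ?_, ?_⟩, ?_⟩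
        · simp only; rw [ht]; linarith
        · simp only; rw [ht]; linarith
        · simp only; rw [ht]; exact Dvd.intro _ rfl
        · simp only [g]
          push_cast
          ext
          · apply mul_left_cancel₀ hdetR
            linear_combination (v : ℝ) * (j - a * x₀ - b * y₀) / 6 * hcR - (v : ℝ) * hqp
              + (b : ℝ) * hp - (b : ℝ) * hxyR
          · apply mul_left_cancel₀ hdetR
            linear_combination -(u : ℝ) * (j - a * x₀ - b * y₀) / 6 * hcR + (u : ℝ) * hqp
              - (a : ℝ) * hp + (a : ℝ) * hxyR
    · rintro ⟨a, b, j⟩ hq p p' h1 h2 h3 h4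
      have hne := hpar _ hq p h1 h2
      obtain ⟨hq1, -, -⟩ := mem_arr.1 hq
      obtain ⟨hdet, -⟩ := hL.2 _ hq1 _ hd₀ hne
      simp only [idet] at hdet
      have hdetR : (a : ℝ) * v - b * u ≠ 0 := by exact_mod_cast hdet
      simp only [LineInc] at h1 h2 h3 h4
      ext
      · apply mul_left_cancel₀ hdetR
        linear_combination (v : ℝ) * (h2 - h4) - (b : ℝ) * (h1 - h3)
      · apply mul_left_cancel₀ hdetR
        linear_combination (-u : ℝ) * (h2 - h4) + (a : ℝ) * (h1 - h3)
  unfold HasChi at *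
  rw [hmain, h, Finset.card_image_of_injective _ hg]
  simp only [map_add, map_one, map_natCast]
  ring

/-- The line family with levels `1 - m ≤ j ≤ m` for every form in `L`, enlarged by the level `-m`
for the forms in `D` and by the level `m + 1` for the forms in `U`. -/
noncomputable def stage (L D U : Finset (ℤ × ℤ)) (m : ℤ) : Finset (ℤ × ℤ × ℤ) :=
  arr L (fun d => if d ∈ D then -m else 1 - m) (fun d => if d ∈ U then m + 1 else m)

lemma stage_insert_lower {L D U : Finset (ℤ × ℤ)} {m : ℤ} {d₀ : ℤ × ℤ} (hL : d₀ ∈ L) (hD : d₀ ∉ D)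
    (hm : 0 ≤ m) :
    stage L (insert d₀ D) U m = insert (d₀.1, d₀.2, -m) (stage L D U m) := by
  ext ⟨a, b, j⟩
  obtain ⟨u, v⟩ := d₀
  simp only [stage, Finset.mem_insert, mem_arr, Prod.mk.injEq]
  by_cases h : a = u ∧ b = v
  · obtain ⟨rfl, rfl⟩ := h
    simp only [true_and, true_or, if_true, hD, if_false, hL]
    split_ifs <;> omega
  · simp only [h, false_or]
    have : ¬ (a = u ∧ b = v ∧ j = -m) := fun h' => h ⟨h'.1, h'.2.1⟩
    simp only [this, false_or]

lemma stage_insert_upper {L D U : Finset (ℤ × ℤ)} {m : ℤ} {d₀ : ℤ × ℤ} (hL : d₀ ∈ L) (hU : d₀ ∉ U)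
    (hm : 0 ≤ m) :
    stage L D (insert d₀ U) m = insert (d₀.1, d₀.2, m + 1) (stage L D U m) := by
  ext ⟨a, b, j⟩
  obtain ⟨u, v⟩ := d₀
  simp only [stage, Finset.mem_insert, mem_arr, Prod.mk.injEq]
  by_cases h : a = u ∧ b = v
  · obtain ⟨rfl, rfl⟩ := h
    simp only [true_and, true_or, if_true, hU, if_false, hL]
    split_ifs <;> omega
  · simp only [h, false_or]
    have : ¬ (a = u ∧ b = v ∧ j = m + 1) := fun h' => h ⟨h'.1, h'.2.1⟩
    simp only [this, false_or]

lemma stage_succ (L : Finset (ℤ × ℤ)) (m : ℤ) : stage L L L m = stage L ∅ ∅ (m + 1) := by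
  ext ⟨a, b, j⟩
  simp only [stage, mem_arr, Finset.notMem_empty, if_false]
  constructor
  · rintro ⟨h1, h2, h3⟩
    rw [if_pos h1] at h2 h3
    exact ⟨h1, by omega, by omega⟩
  · rintro ⟨h1, h2, h3⟩
    rw [if_pos h1, if_pos h1]
    exact ⟨h1, by omega, by omega⟩

lemma stage_zero (L : Finset (ℤ × ℤ)) : stage L ∅ ∅ 0 = ∅ := by
  ext ⟨a, b, j⟩
  simp only [stage, mem_arr, Finset.notMem_empty, if_false, iff_false]
  omega

lemma hasChi_empty : HasChi ∅ 0 0 := by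
  simp [HasChi, incChi]

/-! ### Intersection counts for the three rank two types -/

/-- Coordinates of the positive roots of `A₂` with respect to the simple roots. -/
def formsA : Finset (ℤ × ℤ) := {(1, 0), (0, 1), (1, 1)}

/-- Coordinates of the positive roots of `B₂` with respect to the simple roots, the first of which
is short. -/
def formsB : Finset (ℤ × ℤ) := {(1, 0), (0, 1), (1, 1), (2, 1)}

/-- Coordinates of the positive roots of `G₂` with respect to the simple roots, the first of which
is short. -/
def formsG : Finset (ℤ × ℤ) := {(1, 0), (0, 1), (1, 1), (2, 1), (3, 1), (3, 2)}

lemma goodForms_A : GoodForms formsA := by decide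
lemma goodForms_B : GoodForms formsB := by decide +kernel
lemma goodForms_G : GoodForms formsG := by decide +kernel

/-- Adding the level `-m` of the form `d₀`. The ranges `l₀, …, h₄` list the intersection points, as
in `positions`, counted from the lattice point `-m (x₁, y₁)`. -/
lemma step_lower {L D : Finset (ℤ × ℤ)} {m a b : ℤ} (hL : GoodForms L) (hm : 0 ≤ m) {d₀ : ℤ × ℤ}
    (hd : d₀ ∈ L) (hD : d₀ ∉ D) (x₁ y₁ : ℤ) (hxy : d₀.1 * x₁ + d₀.2 * y₁ = 1)
    (l₀ h₀ l₂ h₂ l₃ h₃ l₄ h₄ N : ℤ)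
    (hk : l₀ ≤ h₀ + 1 ∧ l₂ ≤ h₂ + 1 ∧ l₃ ≤ h₃ + 1 ∧ l₄ ≤ h₄ + 1 ∧
      N = (h₀ + 1 - l₀) + (h₂ + 1 - l₂) + (h₃ + 1 - l₃) + (h₄ + 1 - l₄))
    (hT : ∀ t, t ∈ positions l₀ h₀ l₂ h₂ l₃ h₃ l₄ h₄ ↔ ∃ d ∈ L, d ≠ d₀ ∧
      6 * (if d ∈ D then -m else 1 - m) ≤
        6 * (d.1 * (-m * x₁) + d.2 * (-m * y₁)) + idet d d₀ * t ∧
      6 * (d.1 * (-m * x₁) + d.2 * (-m * y₁)) + idet d d₀ * t ≤ 6 * m ∧ (6 ∣ idet d d₀ * t))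
    (h : HasChi (stage L D ∅ m) a b) : HasChi (stage L (insert d₀ D) ∅ m) (a + 1) (b + N) := by
  obtain ⟨k₀, k₂, k₃, k₄, rfl⟩ := hk
  rw [stage_insert_lower hd hD hm, ← card_positions k₀ k₂ k₃ k₄]
  refine hasChi_insert hL hd (Or.inl ?_) (x₀ := -m * x₁) (y₀ := -m * y₁) ?_ ?_ h
  · simp only [if_neg hD]; omega
  · linear_combination -m * hxy
  · simpa using hT

/-- Adding the level `m + 1` of the form `d₀`, once all levels from `-m` to `m` are present. The
intersection points are counted from the lattice point `(m + 1) (x₁, y₁)`. -/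
lemma step_upper {L U : Finset (ℤ × ℤ)} {m a b : ℤ} (hL : GoodForms L) (hm : 0 ≤ m) {d₀ : ℤ × ℤ}
    (hd : d₀ ∈ L) (hU : d₀ ∉ U) (x₁ y₁ : ℤ) (hxy : d₀.1 * x₁ + d₀.2 * y₁ = 1)
    (l₀ h₀ l₂ h₂ l₃ h₃ l₄ h₄ N : ℤ)
    (hk : l₀ ≤ h₀ + 1 ∧ l₂ ≤ h₂ + 1 ∧ l₃ ≤ h₃ + 1 ∧ l₄ ≤ h₄ + 1 ∧
      N = (h₀ + 1 - l₀) + (h₂ + 1 - l₂) + (h₃ + 1 - l₃) + (h₄ + 1 - l₄))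
    (hT : ∀ t, t ∈ positions l₀ h₀ l₂ h₂ l₃ h₃ l₄ h₄ ↔ ∃ d ∈ L, d ≠ d₀ ∧
      6 * (-m) ≤ 6 * (d.1 * ((m + 1) * x₁) + d.2 * ((m + 1) * y₁)) + idet d d₀ * t ∧
      6 * (d.1 * ((m + 1) * x₁) + d.2 * ((m + 1) * y₁)) + idet d d₀ * t ≤
        6 * (if d ∈ U then m + 1 else m) ∧ (6 ∣ idet d d₀ * t))
    (h : HasChi (stage L L U m) a b) : HasChi (stage L L (insert d₀ U) m) (a + 1) (b + N) := by
  obtain ⟨k₀, k₂, k₃, k₄, rfl⟩ := hk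
  rw [stage_insert_upper hd hU hm, ← card_positions k₀ k₂ k₃ k₄]
  refine hasChi_insert hL hd (Or.inr ?_) (x₀ := (m + 1) * x₁) (y₀ := (m + 1) * y₁) ?_ ?_ h
  · simp only [if_neg hU]; omega
  · linear_combination (m + 1) * hxy
  · intro t
    rw [hT t]
    refine exists_congr fun d => and_congr_right fun hdL => ?_
    rw [if_pos hdL]

/-- One induction step: `χ = (X - h m)²` at the stage `m` implies
`χ = (X - 1 - h m) (X - (|D| - 1) - h m)` once the levels `-m` of a nonempty order ideal `D` are
added, and `χ = (X - h (m + 1))²` at the stage `m + 1`. -/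
def StageFormula (L : Finset (ℤ × ℤ)) (h m : ℤ) : Prop :=
  HasChi (stage L ∅ ∅ m) (2 * (h * m)) ((h * m) ^ 2) →
    (∀ D ⊆ L, D.Nonempty → (∀ d ∈ D, ∀ e ∈ L, e.1 ≤ d.1 → e.2 ≤ d.2 → e ∈ D) →
      HasChi (stage L D ∅ m) (2 * (h * m) + D.card)
        ((h * m) ^ 2 + h * m + (D.card - 1) * (h * m + 1))) ∧
    HasChi (stage L L L m) (2 * (h * (m + 1))) ((h * (m + 1)) ^ 2)

lemma HasChi.congr {S : Finset (ℤ × ℤ × ℤ)} {a b a' b' : ℤ} (h : HasChi S a b) (ha : a = a')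
    (hb : b = b') : HasChi S a' b' := by
  rwa [← ha, ← hb]

/-- The nonempty order ideals of the root poset, written in the order in which `stageFormula_A` adds
their elements; likewise for the other two types. -/
lemma ideals_A : ∀ D ∈ formsA.powerset, D.Nonempty →
    (∀ d ∈ D, ∀ e ∈ formsA, e.1 ≤ d.1 → e.2 ≤ d.2 → e ∈ D) →
    D = {(0, 1)} ∨ D = {(1, 0)} ∨ D = {(0, 1), (1, 0)} ∨ D = {(1, 1), (0, 1), (1, 0)} := by
  decide +kernel

/-- `g1` treats the ideal `{(0, 1)}`, and `s1, s2, …` the chain of ideals that starts with `(1, 0)`;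
`t1, t2, …` complete the next stage. The numbers after the lattice point are the ends of the four
progressions of intersection points and the number of these points. -/
lemma stageFormula_A (m : ℤ) (hm : 0 ≤ m) : StageFormula formsA 3 m := by
  intro h0
  have g1 := step_lower goodForms_A hm (d₀ := (0, 1)) (by decide) (by decide)
    0 1 (by norm_num) (-m + 1) (2 * m) 0 (-1) 0 (-1) 0 (-1) (3 * m) (by omega)
    (by
    intro t; rw [mem_positions]; simp [formsA, idet]
    constructor
    · rintro (h | h | h | h) <;> omega
    · rintro (h | h) <;> omega) h0
  have s1 := step_lower goodForms_A hm (d₀ := (1, 0)) (by decide) (by decide)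
    1 0 (by norm_num) (-2 * m) (m - 1) 0 (-1) 0 (-1) 0 (-1) (3 * m) (by omega)
    (by
    intro t; rw [mem_positions]; simp [formsA, idet]
    constructor
    · rintro (h | h | h | h) <;> omega
    · rintro (h | h) <;> omega) h0
  have s2 := step_lower goodForms_A hm (d₀ := (0, 1)) (by decide) (by decide)
    0 1 (by norm_num) (-m) (2 * m) 0 (-1) 0 (-1) 0 (-1) (3 * m + 1) (by omega)
    (by
    intro t; rw [mem_positions]; simp [formsA, idet]
    constructor
    · rintro (h | h | h | h) <;> omega
    · rintro (h | h) <;> omega) s1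
  have s3 := step_lower goodForms_A hm (d₀ := (1, 1)) (by decide) (by decide)
    1 0 (by norm_num) (-m) (2 * m) 0 (-1) 0 (-1) 0 (-1) (3 * m + 1) (by omega)
    (by
    intro t; rw [mem_positions]; simp [formsA, idet]
    constructor
    · rintro (h | h | h | h) <;> omega
    · rintro (h | h) <;> omega) s2
  have hfull : insert (1, 1) (insert (0, 1) (insert (1, 0) ∅)) = formsA := by decide
  have t0 := s3
  rw [hfull] at t0
  have t1 := step_upper goodForms_A hm (d₀ := (1, 1)) (by decide) (by decide)
    1 0 (by norm_num) (-2 * m - 1) (m) 0 (-1) 0 (-1) 0 (-1) (3 * m + 2) (by omega)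
    (by
    intro t; rw [mem_positions]; simp [formsA, idet]
    constructor
    · rintro (h | h | h | h) <;> omega
    · rintro (h | h) <;> omega) t0
  have t2 := step_upper goodForms_A hm (d₀ := (0, 1)) (by decide) (by decide)
    0 1 (by norm_num) (-2 * m - 1) (m) 0 (-1) 0 (-1) 0 (-1) (3 * m + 2) (by omega)
    (by
    intro t; rw [mem_positions]; simp [formsA, idet]
    constructor
    · rintro (h | h | h | h) <;> omega
    · rintro (h | h) <;> omega) t1
  have t3 := step_upper goodForms_A hm (d₀ := (1, 0)) (by decide) (by decide)
    1 0 (by norm_num) (-m - 1) (2 * m + 1) 0 (-1) 0 (-1) 0 (-1) (3 * m + 3) (by omega)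
    (by
    intro t; rw [mem_positions]; simp [formsA, idet]
    constructor
    · rintro (h | h | h | h) <;> omega
    · rintro (h | h) <;> omega) t2
  have hfull' : insert (1, 0) (insert (0, 1) (insert (1, 1) ∅)) = formsA := by decide
  rw [hfull'] at t3
  refine ⟨fun D hD hne hid => ?_, t3.congr (by ring) (by ring)⟩
  rcases ideals_A D (Finset.mem_powerset.2 hD) hne hid with rfl | rfl | rfl | rfl
  · exact g1.congr (by simp; try ring) (by simp; try ring)
  · exact s1.congr (by simp; try ring) (by simp; try ring)
  · exact s2.congr (by simp; try ring) (by simp; try ring)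
  · exact s3.congr (by simp; try ring) (by simp; try ring)

lemma ideals_B : ∀ D ∈ formsB.powerset, D.Nonempty →
    (∀ d ∈ D, ∀ e ∈ formsB, e.1 ≤ d.1 → e.2 ≤ d.2 → e ∈ D) →
    D = {(0, 1)} ∨ D = {(1, 0)} ∨ D = {(0, 1), (1, 0)} ∨ D = {(1, 1), (0, 1), (1, 0)} ∨ D = {(2, 1), (1, 1), (0, 1), (1, 0)} := by
  decide +kernel

/-- The steps are organized as in `stageFormula_A`. -/
lemma stageFormula_B (m : ℤ) (hm : 0 ≤ m) : StageFormula formsB 4 m := by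
  intro h0
  have g1 := step_lower goodForms_B hm (d₀ := (0, 1)) (by decide) (by decide)
    0 1 (by norm_num) (-m + 1) (2 * m) 0 (-1) 0 (m - 1) 0 (-1) (4 * m) (by omega)
    (by
    intro t; rw [mem_positions]; simp [formsB, idet]
    constructor
    · rintro (h | h | h | h) <;> omega
    · rintro (h | h | h) <;> omega) h0
  have s1 := step_lower goodForms_B hm (d₀ := (1, 0)) (by decide) (by decide)
    1 0 (by norm_num) (-3 * m) (m - 1) 0 (-1) 0 (-1) 0 (-1) (4 * m) (by omega)
    (by
    intro t; rw [mem_positions]; simp [formsB, idet]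
    constructor
    · rintro (h | h | h | h) <;> omega
    · rintro (h | h | h) <;> omega) h0
  have s2 := step_lower goodForms_B hm (d₀ := (0, 1)) (by decide) (by decide)
    0 1 (by norm_num) (-m) (2 * m) 0 (-1) 0 (m - 1) 0 (-1) (4 * m + 1) (by omega)
    (by
    intro t; rw [mem_positions]; simp [formsB, idet]
    constructor
    · rintro (h | h | h | h) <;> omega
    · rintro (h | h | h) <;> omega) s1
  have s3 := step_lower goodForms_B hm (d₀ := (1, 1)) (by decide) (by decide)
    1 0 (by norm_num) (-m) (3 * m) 0 (-1) 0 (-1) 0 (-1) (4 * m + 1) (by omega)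
    (by
    intro t; rw [mem_positions]; simp [formsB, idet]
    constructor
    · rintro (h | h | h | h) <;> omega
    · rintro (h | h | h) <;> omega) s2
  have s4 := step_lower goodForms_B hm (d₀ := (2, 1)) (by decide) (by decide)
    0 1 (by norm_num) (-2 * m) (m) 0 (-1) (-m) (-1) 0 (-1) (4 * m + 1) (by omega)
    (by
    intro t; rw [mem_positions]; simp [formsB, idet]
    constructor
    · rintro (h | h | h | h) <;> omega
    · rintro (h | h | h) <;> omega) s3
  have hfull : insert (2, 1) (insert (1, 1) (insert (0, 1) (insert (1, 0) ∅))) = formsB := by decide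
  have t0 := s4
  rw [hfull] at t0
  have t1 := step_upper goodForms_B hm (d₀ := (2, 1)) (by decide) (by decide)
    0 1 (by norm_num) (-m) (2 * m + 1) 0 (-1) 0 (m) 0 (-1) (4 * m + 3) (by omega)
    (by
    intro t; rw [mem_positions]; simp [formsB, idet]
    constructor
    · rintro (h | h | h | h) <;> omega
    · rintro (h | h | h) <;> omega) t0
  have t2 := step_upper goodForms_B hm (d₀ := (1, 1)) (by decide) (by decide)
    1 0 (by norm_num) (-3 * m - 2) (m) 0 (-1) 0 (-1) 0 (-1) (4 * m + 3) (by omega)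
    (by
    intro t; rw [mem_positions]; simp [formsB, idet]
    constructor
    · rintro (h | h | h | h) <;> omega
    · rintro (h | h | h) <;> omega) t1
  have t3 := step_upper goodForms_B hm (d₀ := (0, 1)) (by decide) (by decide)
    0 1 (by norm_num) (-2 * m - 1) (m) 0 (-1) (-m - 1) (-1) 0 (-1) (4 * m + 3) (by omega)
    (by
    intro t; rw [mem_positions]; simp [formsB, idet]
    constructor
    · rintro (h | h | h | h) <;> omega
    · rintro (h | h | h) <;> omega) t2
  have t4 := step_upper goodForms_B hm (d₀ := (1, 0)) (by decide) (by decide)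
    1 0 (by norm_num) (-m - 1) (3 * m + 2) 0 (-1) 0 (-1) 0 (-1) (4 * m + 4) (by omega)
    (by
    intro t; rw [mem_positions]; simp [formsB, idet]
    constructor
    · rintro (h | h | h | h) <;> omega
    · rintro (h | h | h) <;> omega) t3
  have hfull' : insert (1, 0) (insert (0, 1) (insert (1, 1) (insert (2, 1) ∅))) = formsB := by decide
  rw [hfull'] at t4
  refine ⟨fun D hD hne hid => ?_, t4.congr (by ring) (by ring)⟩
  rcases ideals_B D (Finset.mem_powerset.2 hD) hne hid with rfl | rfl | rfl | rfl | rfl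
  · exact g1.congr (by simp; try ring) (by simp; try ring)
  · exact s1.congr (by simp; try ring) (by simp; try ring)
  · exact s2.congr (by simp; try ring) (by simp; try ring)
  · exact s3.congr (by simp; try ring) (by simp; try ring)
  · exact s4.congr (by simp; try ring) (by simp; try ring)

lemma ideals_G : ∀ D ∈ formsG.powerset, D.Nonempty →
    (∀ d ∈ D, ∀ e ∈ formsG, e.1 ≤ d.1 → e.2 ≤ d.2 → e ∈ D) →
    D = {(0, 1)} ∨ D = {(1, 0)} ∨ D = {(0, 1), (1, 0)} ∨ D = {(1, 1), (0, 1), (1, 0)} ∨ D = {(2, 1), (1, 1), (0, 1), (1, 0)} ∨ D = {(3, 1), (2, 1), (1, 1), (0, 1), (1, 0)} ∨ D = {(3, 2), (3, 1), (2, 1), (1, 1), (0, 1), (1, 0)} := by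
  decide +kernel

set_option maxHeartbeats 4000000 in
/-- The steps are organized as in `stageFormula_A`. -/
lemma stageFormula_G (m : ℤ) (hm : 0 ≤ m) : StageFormula formsG 6 m := by
  intro h0
  have g1 := step_lower goodForms_G hm (d₀ := (0, 1)) (by decide) (by decide)
    0 1 (by norm_num) (-m + 1) (2 * m) 0 (m - 1) 0 (m - 1) 0 (m - 1) (6 * m) (by omega)
    (by
    intro t; rw [mem_positions]; simp [formsG, idet]
    constructor
    · rintro (h | h | h | h) <;> omega
    · rintro (h | h | h | h | h) <;> omega) h0
  have s1 := step_lower goodForms_G hm (d₀ := (1, 0)) (by decide) (by decide)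
    1 0 (by norm_num) (-4 * m) (m - 1) 0 (-1) (-2 * m) (-m - 1) 0 (-1) (6 * m) (by omega)
    (by
    intro t; rw [mem_positions]; simp [formsG, idet]
    constructor
    · rintro (h | h | h | h) <;> omega
    · rintro (h | h | h | h | h) <;> omega) h0
  have s2 := step_lower goodForms_G hm (d₀ := (0, 1)) (by decide) (by decide)
    0 1 (by norm_num) (-m) (2 * m) 0 (m - 1) 0 (m - 1) 0 (m - 1) (6 * m + 1) (by omega)
    (by
    intro t; rw [mem_positions]; simp [formsG, idet]
    constructor
    · rintro (h | h | h | h) <;> omega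
    · rintro (h | h | h | h | h) <;> omega) s1
  have s3 := step_lower goodForms_G hm (d₀ := (1, 1)) (by decide) (by decide)
    1 0 (by norm_num) (-m) (4 * m) 0 (-1) (m) (2 * m - 1) 0 (-1) (6 * m + 1) (by omega)
    (by
    intro t; rw [mem_positions]; simp [formsG, idet]
    constructor
    · rintro (h | h | h | h) <;> omega
    · rintro (h | h | h | h | h) <;> omega) s2
  have s4 := step_lower goodForms_G hm (d₀ := (2, 1)) (by decide) (by decide)
    0 1 (by norm_num) (-3 * m) (2 * m) 0 (-1) (-m) (-1) 0 (-1) (6 * m + 1) (by omega)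
    (by
    intro t; rw [mem_positions]; simp [formsG, idet]
    constructor
    · rintro (h | h | h | h) <;> omega
    · rintro (h | h | h | h | h) <;> omega) s3
  have s5 := step_lower goodForms_G hm (d₀ := (3, 1)) (by decide) (by decide)
    0 1 (by norm_num) (-2 * m) (m) (-m) (-1) (-m) (-1) (-m) (-1) (6 * m + 1) (by omega)
    (by
    intro t; rw [mem_positions]; simp [formsG, idet]
    constructor
    · rintro (h | h | h | h) <;> omega
    · rintro (h | h | h | h | h) <;> omega) s4
  have s6 := step_lower goodForms_G hm (d₀ := (3, 2)) (by decide) (by decide)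
    1 (-1) (by norm_num) (-m) (2 * m) 0 (m - 1) 0 (m - 1) 0 (m - 1) (6 * m + 1) (by omega)
    (by
    intro t; rw [mem_positions]; simp [formsG, idet]
    constructor
    · rintro (h | h | h | h) <;> omega
    · rintro (h | h | h | h | h) <;> omega) s5
  have hfull : insert (3, 2) (insert (3, 1) (insert (2, 1) (insert (1, 1) (insert (0, 1) (insert (1, 0) ∅))))) = formsG := by decide
  have t0 := s6
  rw [hfull] at t0
  have t1 := step_upper goodForms_G hm (d₀ := (3, 2)) (by decide) (by decide)
    1 (-1) (by norm_num) (-2 * m - 1) (m) (-m - 1) (-1) (-m - 1) (-1) (-m - 1) (-1) (6 * m + 5) (by omega)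
    (by
    intro t; rw [mem_positions]; simp [formsG, idet]
    constructor
    · rintro (h | h | h | h) <;> omega
    · rintro (h | h | h | h | h) <;> omega) t0
  have t2 := step_upper goodForms_G hm (d₀ := (3, 1)) (by decide) (by decide)
    0 1 (by norm_num) (-m) (2 * m + 1) 0 (m) 0 (m) 0 (m) (6 * m + 5) (by omega)
    (by
    intro t; rw [mem_positions]; simp [formsG, idet]
    constructor
    · rintro (h | h | h | h) <;> omega
    · rintro (h | h | h | h | h) <;> omega) t1
  have t3 := step_upper goodForms_G hm (d₀ := (2, 1)) (by decide) (by decide)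
    0 1 (by norm_num) (-2 * m - 1) (3 * m + 2) 0 (-1) 0 (m) 0 (-1) (6 * m + 5) (by omega)
    (by
    intro t; rw [mem_positions]; simp [formsG, idet]
    constructor
    · rintro (h | h | h | h) <;> omega
    · rintro (h | h | h | h | h) <;> omega) t2
  have t4 := step_upper goodForms_G hm (d₀ := (1, 1)) (by decide) (by decide)
    1 0 (by norm_num) (-4 * m - 3) (m) 0 (-1) (-2 * m - 2) (-m - 2) 0 (-1) (6 * m + 5) (by omega)
    (by
    intro t; rw [mem_positions]; simp [formsG, idet]
    constructor
    · rintro (h | h | h | h) <;> omega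
    · rintro (h | h | h | h | h) <;> omega) t3
  have t5 := step_upper goodForms_G hm (d₀ := (0, 1)) (by decide) (by decide)
    0 1 (by norm_num) (-2 * m - 1) (m) (-m - 1) (-1) (-m - 1) (-1) (-m - 1) (-1) (6 * m + 5) (by omega)
    (by
    intro t; rw [mem_positions]; simp [formsG, idet]
    constructor
    · rintro (h | h | h | h) <;> omega
    · rintro (h | h | h | h | h) <;> omega) t4
  have t6 := step_upper goodForms_G hm (d₀ := (1, 0)) (by decide) (by decide)
    1 0 (by norm_num) (-m - 1) (4 * m + 3) 0 (-1) (m + 1) (2 * m + 1) 0 (-1) (6 * m + 6) (by omega)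
    (by
    intro t; rw [mem_positions]; simp [formsG, idet]
    constructor
    · rintro (h | h | h | h) <;> omega
    · rintro (h | h | h | h | h) <;> omega) t5
  have hfull' : insert (1, 0) (insert (0, 1) (insert (1, 1) (insert (2, 1) (insert (3, 1) (insert (3, 2) ∅))))) = formsG := by decide
  rw [hfull'] at t6
  refine ⟨fun D hD hne hid => ?_, t6.congr (by ring) (by ring)⟩
  rcases ideals_G D (Finset.mem_powerset.2 hD) hne hid with rfl | rfl | rfl | rfl | rfl | rfl | rfl
  · exact g1.congr (by simp; try ring) (by simp; try ring)
  · exact s1.congr (by simp; try ring) (by simp; try ring)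
  · exact s2.congr (by simp; try ring) (by simp; try ring)
  · exact s3.congr (by simp; try ring) (by simp; try ring)
  · exact s4.congr (by simp; try ring) (by simp; try ring)
  · exact s5.congr (by simp; try ring) (by simp; try ring)
  · exact s6.congr (by simp; try ring) (by simp; try ring)

/-- With the levels `1 - m ≤ j ≤ m` for all forms, `χ = (X - h m)²`. -/
lemma hasChi_stage {L : Finset (ℤ × ℤ)} {h : ℤ} (hf : ∀ m : ℤ, 0 ≤ m → StageFormula L h m)
    (m : ℕ) : HasChi (stage L ∅ ∅ m) (2 * (h * m)) ((h * m) ^ 2) := by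
  induction m with
  | zero =>
    have := stage_zero L
    simpa [this] using hasChi_empty
  | succ k ih =>
    have := (hf k (by positivity) ih).2
    rw [stage_succ] at this
    exact_mod_cast this

/-! ### Classification of irreducible rank two root systems -/

/-- The determinant of two vectors of the plane. -/
def rdet (u v : Fin 2 → ℝ) : ℝ := u 0 * v 1 - u 1 * v 0

/-- The vector with integral coordinates `d` in the basis `α, β`. -/
noncomputable def comb (α β : Fin 2 → ℝ) (d : ℤ × ℤ) : Fin 2 → ℝ := (d.1 : ℝ) • α + (d.2 : ℝ) • β

lemma rdot_two (u v : Fin 2 → ℝ) : rdot u v = u 0 * v 0 + u 1 * v 1 := by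
  simp [rdot, Fin.sum_univ_two]

lemma rdot_self_pos {v : Fin 2 → ℝ} (hv : v ≠ 0) : 0 < rdot v v := by
  rw [rdot_two]
  by_contra h
  apply hv
  ext i
  fin_cases i
  · simp only [Fin.zero_eta, Pi.zero_apply]; nlinarith [sq_nonneg (v 0), sq_nonneg (v 1)]
  · simp only [Fin.mk_one, Pi.zero_apply]; nlinarith [sq_nonneg (v 0), sq_nonneg (v 1)]

lemma eq_smul_of_rdet_eq_zero {u v : Fin 2 → ℝ} (hv : v ≠ 0) (h : rdet u v = 0) :
    u = (rdot u v / rdot v v) • v := by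
  have hp := rdot_self_pos hv
  rw [rdet] at h
  ext i
  rw [Pi.smul_apply, smul_eq_mul, div_mul_eq_mul_div, eq_div_iff hp.ne']
  rw [rdot_two, rdot_two]
  fin_cases i
  · simp only [Fin.zero_eta]; linear_combination v 1 * h
  · simp only [Fin.mk_one]; linear_combination -v 0 * h

lemma exists_coords {α β : Fin 2 → ℝ} (h : rdet α β ≠ 0) (v : Fin 2 → ℝ) :
    ∃ x y : ℝ, v = x • α + y • β := by
  refine ⟨rdet v β / rdet α β, rdet α v / rdet α β, ?_⟩
  ext i
  simp only [Pi.add_apply, Pi.smul_apply, smul_eq_mul]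
  rw [div_mul_eq_mul_div, div_mul_eq_mul_div, ← add_div, eq_div_iff h]
  simp only [rdet]
  fin_cases i
  · simp only [Fin.zero_eta]; ring
  · simp only [Fin.mk_one]; ring

section roots

variable {Φ : Finset (Fin 2 → ℝ)}

lemma root_ne_zero (hΦ : IsRootSystem Φ) {v : Fin 2 → ℝ} (hv : v ∈ Φ) : v ≠ 0 :=
  fun h => hΦ.1 (h ▸ hv)

lemma neg_root (hΦ : IsRootSystem Φ) {v : Fin 2 → ℝ} (hv : v ∈ Φ) : -v ∈ Φ := by
  have h := hΦ.2.1 v hv v hv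
  have hp := (rdot_self_pos (root_ne_zero hΦ hv)).ne'
  rw [mul_div_assoc, div_self hp] at h
  convert h using 1
  module

/-- Reflection in a root, with the Cartan number `c` given in cleared form. -/
lemma reflect_root (hΦ : IsRootSystem Φ) {u v : Fin 2 → ℝ} (hu : u ∈ Φ) (hv : v ∈ Φ) (c : ℝ)
    (hc : 2 * rdot v u = c * rdot u u) {w : Fin 2 → ℝ} (hw : w = v - c • u) : w ∈ Φ := by
  have h := hΦ.2.1 u hu v hv
  have hp := (rdot_self_pos (root_ne_zero hΦ hu)).ne'
  rw [hc, mul_div_assoc, div_self hp, mul_one] at h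
  rwa [hw]

lemma rdot_comm' (u v : Fin 2 → ℝ) : rdot u v = rdot v u := by
  rw [rdot_two, rdot_two]; ring

/-- For independent roots the product of the two Cartan numbers is `0`, `1`, `2` or `3`. -/
lemma cartan_product (hΦ : IsRootSystem Φ) {u v : Fin 2 → ℝ} (hu : u ∈ Φ) (hv : v ∈ Φ)
    (hd : rdet u v ≠ 0) : ∃ p q : ℤ, 2 * rdot v u = p * rdot u u ∧ 2 * rdot v u = q * rdot v v ∧
      (p * q = 0 ∨ p * q = 1 ∨ p * q = 2 ∨ p * q = 3) ∧
      4 * rdot v u ^ 2 = ((p * q : ℤ) : ℝ) * (rdot u u * rdot v v) := by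
  have hpu := rdot_self_pos (root_ne_zero hΦ hu)
  have hpv := rdot_self_pos (root_ne_zero hΦ hv)
  obtain ⟨p, hp⟩ := hΦ.2.2.1 u hu v hv
  obtain ⟨q, hq⟩ := hΦ.2.2.1 v hv u hu
  rw [div_eq_iff hpu.ne'] at hp
  rw [div_eq_iff hpv.ne', rdot_comm'] at hq
  have hpq : 4 * rdot v u ^ 2 = ((p * q : ℤ) : ℝ) * (rdot u u * rdot v v) := by
    push_cast
    linear_combination 2 * rdot v u * hp + (p : ℝ) * rdot u u * hq
  refine ⟨p, q, hp, hq, ?_, hpq⟩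
  have hpos : 0 < rdot u u * rdot v v := mul_pos hpu hpv
  -- Lagrange's identity gives the strict Cauchy-Schwarz inequality.
  have hlag : rdot u u * rdot v v - rdot v u ^ 2 = rdet u v ^ 2 := by
    simp only [rdot_two, rdet]; ring
  have hd2 : 0 < rdet u v ^ 2 := by positivity
  have h1 : ((p * q : ℤ) : ℝ) < 4 := by
    by_contra h
    push Not at h
    nlinarith
  have h0 : (0 : ℝ) ≤ ((p * q : ℤ) : ℝ) := by
    by_contra h
    push Not at h
    nlinarith [sq_nonneg (rdot v u)]
  have h1' : p * q < 4 := by exact_mod_cast h1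
  have h0' : 0 ≤ p * q := by exact_mod_cast h0
  omega

/-- An irreducible root system spanning the plane has two roots that are neither parallel nor
orthogonal. -/
lemma exists_oblique (hΦ : IsRootSystem Φ)
    (hspan : Submodule.span ℝ (Φ : Set (Fin 2 → ℝ)) = ⊤) (hirr : IsIrreducibleRS Φ) :
    ∃ u ∈ Φ, ∃ v ∈ Φ, rdet u v ≠ 0 ∧ rdot u v ≠ 0 := by
  classical
  by_contra hcon
  push Not at hcon
  have hne : Φ.Nonempty := by
    rw [Finset.nonempty_iff_ne_empty]
    rintro rfl
    simp at hspan
  obtain ⟨α, hα⟩ := hne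
  have hα0 := root_ne_zero hΦ hα
  apply hirr
  refine ⟨Φ.filter fun v => rdet v α = 0, Φ.filter fun v => ¬ rdet v α = 0,
    (Finset.filter_union_filter_not_eq _ _).symm, ⟨α, ?_⟩, ?_, ?_⟩
  · rw [Finset.mem_filter]
    exact ⟨hα, by simp only [rdet]; ring⟩
  · by_contra hemp
    rw [Finset.not_nonempty_iff_eq_empty] at hemp
    have hall : ∀ v ∈ Φ, rdet v α = 0 := by
      intro v hv
      by_contra h
      have : v ∈ (∅ : Finset (Fin 2 → ℝ)) := hemp ▸ Finset.mem_filter.2 ⟨hv, h⟩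
      simp at this
    have hle : Submodule.span ℝ (Φ : Set (Fin 2 → ℝ)) ≤ Submodule.span ℝ {α} := by
      rw [Submodule.span_le]
      intro v hv
      rw [eq_smul_of_rdet_eq_zero hα0 (hall v hv)]
      exact Submodule.smul_mem _ _ (Submodule.mem_span_singleton_self α)
    rw [hspan, top_le_iff] at hle
    have hfr := finrank_span_singleton (K := ℝ) hα0
    rw [hle, finrank_top] at hfr
    simp at hfr
  · intro u hu v hv
    rw [Finset.mem_filter] at hu hv
    -- `u` is a multiple of `α`, and `α`, `v` are independent, hence orthogonal.
    have h1 : rdot v α = 0 := hcon v hv.1 α hα hv.2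
    rw [eq_smul_of_rdet_eq_zero hα0 hu.2, rdot_two]
    rw [rdot_two] at h1
    simp only [Pi.smul_apply, smul_eq_mul]
    linear_combination (rdot u α / rdot α α) * h1

/-- Roots `α`, `β` whose Cartan numbers are `-K` and `-1`. -/
def Adapted (Φ : Finset (Fin 2 → ℝ)) (K : ℝ) (α β : Fin 2 → ℝ) : Prop :=
  α ∈ Φ ∧ β ∈ Φ ∧ rdet α β ≠ 0 ∧ rdot β β = K * rdot α α ∧ 2 * rdot α β = -K * rdot α α

/-- For a pair of roots realizing the Cartan product `K ∈ {1, 2, 3}`, the shorter root and a sign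
change of the longer one form an adapted pair. -/
lemma exists_adapted (hΦ : IsRootSystem Φ) {u v : Fin 2 → ℝ} (hu : u ∈ Φ) (hv : v ∈ Φ)
    (hd : rdet u v ≠ 0) {p q K : ℤ} (hp : 2 * rdot v u = p * rdot u u)
    (hq : 2 * rdot v u = q * rdot v v) (hpq : p * q = K) (hK : K = 1 ∨ K = 2 ∨ K = 3) :
    ∃ α β, Adapted Φ K α β := by
  have aux : ∀ u ∈ Φ, ∀ v ∈ Φ, rdet u v ≠ 0 → 2 * rdot v u = K * rdot u u →
      2 * rdot v u = rdot v v → ∃ α β, Adapted Φ K α β := by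
    intro u hu v hv hd h1 h2
    refine ⟨u, -v, hu, neg_root hΦ hv, ?_, ?_, ?_⟩
    · simp only [rdet, Pi.neg_apply] at hd ⊢
      intro h; apply hd; linear_combination -h
    · rw [rdot_two (-v)]
      rw [rdot_two v v] at h2
      simp only [Pi.neg_apply]
      linear_combination h1 - h2
    · rw [rdot_two u (-v)]
      rw [rdot_two v u] at h1
      simp only [Pi.neg_apply]
      linear_combination -h1
  have aux' : ∀ u ∈ Φ, ∀ v ∈ Φ, rdet u v ≠ 0 → 2 * rdot v u = -K * rdot u u →
      2 * rdot v u = -rdot v v → ∃ α β, Adapted Φ K α β := by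
    intro u hu v hv hd h1 h2
    refine ⟨u, v, hu, hv, hd, ?_, ?_⟩
    · linear_combination h2 - h1
    · rw [rdot_comm' u v]; exact h1
  have hd' : rdet v u ≠ 0 := by
    simp only [rdet] at hd ⊢
    intro h; apply hd; linear_combination -h
  have hcases : (p = K ∧ q = 1) ∨ (p = -K ∧ q = -1) ∨ (p = 1 ∧ q = K) ∨ (p = -1 ∧ q = -K) := by
    have hpd : p ∣ K := ⟨q, hpq.symm⟩
    have hle : |p| ≤ K := by
      have := Int.le_of_dvd (by omega) ((abs_dvd p K).2 hpd)
      exact this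
    have h1 := abs_le.1 hle
    rcases hK with rfl | rfl | rfl
    all_goals
      have hp1 := h1.1
      have hp2 := h1.2
      interval_cases p <;> omega
  rcases hcases with ⟨rfl, rfl⟩ | ⟨rfl, rfl⟩ | ⟨rfl, rfl⟩ | ⟨rfl, rfl⟩
  · exact aux u hu v hv hd hp (by simpa using hq)
  · exact aux' u hu v hv hd (by push_cast at hp; exact hp) (by simpa using hq)
  · exact aux v hv u hu hd' (by rw [rdot_comm' u v]; exact hq)
      (by rw [rdot_comm' u v]; simpa using hp)
  · exact aux' v hv u hu hd' (by rw [rdot_comm' u v]; push_cast at hq; exact hq)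
      (by rw [rdot_comm' u v]; simpa using hp)

/-- An adapted pair for the largest Cartan product that occurs among independent roots. -/
lemma exists_maximal_adapted (hΦ : IsRootSystem Φ)
    (hspan : Submodule.span ℝ (Φ : Set (Fin 2 → ℝ)) = ⊤) (hirr : IsIrreducibleRS Φ) :
    ∃ K : ℤ, (K = 1 ∨ K = 2 ∨ K = 3) ∧ (∃ α β, Adapted Φ K α β) ∧
      ∀ u ∈ Φ, ∀ v ∈ Φ, rdet u v ≠ 0 → 4 * rdot v u ^ 2 ≤ K * (rdot u u * rdot v v) := by
  have bound : ∀ K : ℤ, (∀ u ∈ Φ, ∀ v ∈ Φ, rdet u v ≠ 0 → ∀ p q : ℤ, 2 * rdot v u = p * rdot u u →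
      2 * rdot v u = q * rdot v v → p * q ≤ K) →
      ∀ u ∈ Φ, ∀ v ∈ Φ, rdet u v ≠ 0 → 4 * rdot v u ^ 2 ≤ K * (rdot u u * rdot v v) := by
    intro K h u hu v hv hd
    obtain ⟨p, q, hp, hq, -, hpq⟩ := cartan_product hΦ hu hv hd
    have h1 : ((p * q : ℤ) : ℝ) ≤ K := by exact_mod_cast h u hu v hv hd p q hp hq
    rw [hpq]
    exact mul_le_mul_of_nonneg_right h1 (mul_pos (rdot_self_pos (root_ne_zero hΦ hu))
      (rdot_self_pos (root_ne_zero hΦ hv))).le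
  have uniq : ∀ u ∈ Φ, ∀ v ∈ Φ, ∀ p q p' q' : ℤ, 2 * rdot v u = p * rdot u u →
      2 * rdot v u = q * rdot v v → 2 * rdot v u = p' * rdot u u →
      2 * rdot v u = q' * rdot v v → p * q = p' * q' := by
    intro u hu v hv p q p' q' h1 h2 h3 h4
    have hu' := (rdot_self_pos (root_ne_zero hΦ hu)).ne'
    have hv' := (rdot_self_pos (root_ne_zero hΦ hv)).ne'
    have e1 : (p : ℝ) = p' := mul_right_cancel₀ hu' (h1.symm.trans h3)
    have e2 : (q : ℝ) = q' := mul_right_cancel₀ hv' (h2.symm.trans h4)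
    have e1' : p = p' := by exact_mod_cast e1
    have e2' : q = q' := by exact_mod_cast e2
    rw [e1', e2']
  let occurs : ℤ → Prop := fun K => ∃ u ∈ Φ, ∃ v ∈ Φ, rdet u v ≠ 0 ∧ ∃ p q : ℤ,
    2 * rdot v u = p * rdot u u ∧ 2 * rdot v u = q * rdot v v ∧ p * q = K
  have finish : ∀ K : ℤ, (K = 1 ∨ K = 2 ∨ K = 3) → occurs K → (∀ K', K < K' → K' ≤ 3 → ¬ occurs K') →
      ∃ K : ℤ, (K = 1 ∨ K = 2 ∨ K = 3) ∧ (∃ α β, Adapted Φ K α β) ∧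
      ∀ u ∈ Φ, ∀ v ∈ Φ, rdet u v ≠ 0 → 4 * rdot v u ^ 2 ≤ K * (rdot u u * rdot v v) := by
    rintro K hK ⟨u, hu, v, hv, hd, p, q, hp, hq, hpq⟩ hmax
    refine ⟨K, hK, exists_adapted hΦ hu hv hd hp hq hpq hK, bound K ?_⟩
    intro u hu v hv hd p q hp hq
    by_contra hlt
    push Not at hlt
    obtain ⟨p', q', hp', hq', hr, -⟩ := cartan_product hΦ hu hv hd
    have := uniq u hu v hv p q p' q' hp hq hp' hq'
    exact hmax (p * q) hlt (by omega) ⟨u, hu, v, hv, hd, p, q, hp, hq, rfl⟩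
  by_cases o3 : occurs 3
  · exact finish 3 (by norm_num) o3 (fun K' h1 h2 => by omega)
  by_cases o2 : occurs 2
  · refine finish 2 (by norm_num) o2 (fun K' h1 h2 => ?_)
    obtain rfl : K' = 3 := by omega
    exact o3
  have o1 : occurs 1 := by
    obtain ⟨u, hu, v, hv, hd, hne⟩ := exists_oblique hΦ hspan hirr
    obtain ⟨p, q, hp, hq, hr, hpq⟩ := cartan_product hΦ hu hv hd
    rcases hr with h | h | h | h
    · rw [h, rdot_comm'] at hpq
      exfalso
      apply hne
      have : rdot u v ^ 2 = 0 := by push_cast at hpq; linarith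
      exact pow_eq_zero_iff (two_ne_zero) |>.1 this
    · exact ⟨u, hu, v, hv, hd, p, q, hp, hq, h⟩
    · exact absurd ⟨u, hu, v, hv, hd, p, q, hp, hq, h⟩ o2
    · exact absurd ⟨u, hu, v, hv, hd, p, q, hp, hq, h⟩ o3
  refine finish 1 (by norm_num) o1 (fun K' h1 h2 => ?_)
  obtain rfl | rfl : K' = 2 ∨ K' = 3 := by omega
  · exact o2
  · exact o3

/-- The inner product in the coordinates of an adapted pair. -/
lemma rdot_adapted {K : ℝ} {α β : Fin 2 → ℝ} (h : Adapted Φ K α β) (x y x' y' : ℝ) :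
    rdot (x • α + y • β) (x' • α + y' • β)
      = rdot α α * (x * x' - K / 2 * (x * y' + x' * y) + K * (y * y')) := by
  obtain ⟨-, -, -, h1, h2⟩ := h
  have : rdot (x • α + y • β) (x' • α + y' • β)
      = x * x' * rdot α α + (x * y' + x' * y) * rdot α β + y * y' * rdot β β := by
    simp only [rdot_two, Pi.add_apply, Pi.smul_apply, smul_eq_mul]; ring
  rw [this]
  linear_combination (x * y' + x' * y) / 2 * h2 + y * y' * h1

/-- The roots with coordinates in `L` are all roots up to sign, provided that no nonzero vector
`x α + y β` satisfies the angle bound of the Cartan product `K` against every one of them. -/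
lemma roots_eq_of_bound (hΦ : IsRootSystem Φ) {K : ℝ} {α β : Fin 2 → ℝ} (hA : Adapted Φ K α β)
    (hK : ∀ u ∈ Φ, ∀ v ∈ Φ, rdet u v ≠ 0 → 4 * rdot v u ^ 2 ≤ K * (rdot u u * rdot v v))
    (L : Finset (ℤ × ℤ)) (hL : ∀ d ∈ L, comb α β d ∈ Φ)
    (hred : ∀ x y : ℝ, (∀ d ∈ L, 4 * (x * d.1 - K / 2 * (x * d.2 + d.1 * y) + K * (y * d.2)) ^ 2
        ≤ K * ((d.1 * d.1 - K / 2 * (d.1 * d.2 + d.1 * d.2) + K * (d.2 * d.2))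
          * (x * x - K / 2 * (x * y + x * y) + K * (y * y)))) →
      x * x - K / 2 * (x * y + x * y) + K * (y * y) ≤ 0) (v : Fin 2 → ℝ) :
    v ∈ Φ ↔ ∃ d ∈ L, v = comb α β d ∨ v = -comb α β d := by
  constructor
  · intro hv
    by_contra hcon
    push Not at hcon
    obtain ⟨x, y, rfl⟩ := exists_coords hA.2.2.1 v
    have hα := rdot_self_pos (root_ne_zero hΦ hA.1)
    have hpos := rdot_self_pos (root_ne_zero hΦ hv)
    rw [rdot_adapted hA] at hpos
    have hQ := hred x y ?_
    · nlinarith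
    intro d hd
    have hdet : rdet (comb α β d) (x • α + y • β) ≠ 0 := by
      intro h0
      have h0' : rdet (x • α + y • β) (comb α β d) = 0 := by
        simp only [rdet] at h0 ⊢; linear_combination -h0
      have heq := eq_smul_of_rdet_eq_zero (root_ne_zero hΦ (hL d hd)) h0'
      rcases hΦ.2.2.2 _ (hL d hd) _ (heq ▸ hv) with h1 | h1
      · rw [h1, one_smul] at heq
        exact (hcon d hd).1 heq
      · rw [h1, neg_one_smul] at heq
        exact (hcon d hd).2 heq
    have hb := hK _ (hL d hd) _ hv hdet
    simp only [comb] at hb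
    rw [rdot_adapted hA, rdot_adapted hA, rdot_adapted hA] at hb
    have hsq : 0 < rdot α α ^ 2 := by positivity
    refine le_of_mul_le_mul_left ?_ hsq
    linarith
  · rintro ⟨d, hd, rfl | rfl⟩
    · exact hL d hd
    · exact neg_root hΦ (hL d hd)

/-- Every irreducible crystallographic root system spanning the plane is of type `A₂`, `B₂` or
`G₂` in suitable coordinates. -/
theorem classification (hΦ : IsRootSystem Φ)
    (hspan : Submodule.span ℝ (Φ : Set (Fin 2 → ℝ)) = ⊤) (hirr : IsIrreducibleRS Φ) :
    ∃ α β : Fin 2 → ℝ, rdet α β ≠ 0 ∧ ∃ L : Finset (ℤ × ℤ),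
      (L = formsA ∨ L = formsB ∨ L = formsG) ∧
      ∀ v, v ∈ Φ ↔ ∃ d ∈ L, v = comb α β d ∨ v = -comb α β d := by
  obtain ⟨K, hK, ⟨α, β, hA⟩, hb⟩ := exists_maximal_adapted hΦ hspan hirr
  refine ⟨α, β, hA.2.2.1, ?_⟩
  obtain ⟨hα, hβ, -, -, -⟩ := id hA
  have c10 : comb α β (1, 0) ∈ Φ := by simpa [comb] using hα
  have c01 : comb α β (0, 1) ∈ Φ := by simpa [comb] using hβ
  -- The reflection of `comb d` in `comb e` has coordinates `d - c e`, `c` the Cartan number.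
  have refl : ∀ (e d f : ℤ × ℤ) (c : ℤ), comb α β e ∈ Φ → comb α β d ∈ Φ →
      2 * ((d.1 : ℝ) * e.1 - (K : ℝ) / 2 * (d.1 * e.2 + e.1 * d.2) + K * (d.2 * e.2))
        = c * ((e.1 : ℝ) * e.1 - (K : ℝ) / 2 * (e.1 * e.2 + e.1 * e.2) + K * (e.2 * e.2)) →
      f.1 = d.1 - c * e.1 → f.2 = d.2 - c * e.2 → comb α β f ∈ Φ := by
    intro e d f c he hd hc h1 h2
    refine reflect_root hΦ he hd (c : ℝ) ?_ ?_
    · simp only [comb]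
      rw [rdot_adapted hA, rdot_adapted hA]
      linear_combination rdot α α * hc
    · simp only [comb, h1, h2]
      push_cast
      module
  rcases hK with rfl | rfl | rfl
  · refine ⟨formsA, Or.inl rfl, roots_eq_of_bound hΦ hA hb _ ?_ ?_⟩
    · have c11 : comb α β (1, 1) ∈ Φ := refl (1, 0) (0, 1) (1, 1) (-1) c10 c01
        (by norm_num) (by norm_num) (by norm_num)
      simp only [formsA, Finset.mem_insert, Finset.mem_singleton]
      rintro d (rfl | rfl | rfl) <;> assumption
    · intro x y h
      have h1 := h (1, 0) (by decide)
      have h2 := h (0, 1) (by decide)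
      have h3 := h (1, 1) (by decide)
      norm_num at h1 h2 h3 ⊢
      nlinarith
  · refine ⟨formsB, Or.inr (Or.inl rfl), roots_eq_of_bound hΦ hA hb _ ?_ ?_⟩
    · have c11 : comb α β (1, 1) ∈ Φ := refl (0, 1) (1, 0) (1, 1) (-1) c01 c10
        (by norm_num) (by norm_num) (by norm_num)
      have c21 : comb α β (2, 1) ∈ Φ := refl (1, 0) (0, 1) (2, 1) (-2) c10 c01
        (by norm_num) (by norm_num) (by norm_num)
      simp only [formsB, Finset.mem_insert, Finset.mem_singleton]
      rintro d (rfl | rfl | rfl | rfl) <;> assumption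
    · intro x y h
      have h1 := h (1, 0) (by decide)
      have h2 := h (0, 1) (by decide)
      have h3 := h (1, 1) (by decide)
      have h4 := h (2, 1) (by decide)
      norm_num at h1 h2 h3 h4 ⊢
      -- Coordinates `x - y` and `y` refer to the orthogonal roots `α` and `α + β`.
      have e1 : (x - y) ^ 2 = y ^ 2 := by nlinarith
      have e2 : (x - y) * y = 0 := by nlinarith
      have e3 : y ^ 2 * y ^ 2 = 0 := by
        calc y ^ 2 * y ^ 2 = (x - y) ^ 2 * y ^ 2 := by rw [e1]
          _ = ((x - y) * y) ^ 2 := by ring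
          _ = 0 := by rw [e2]; ring
      have e4 : y ^ 2 = 0 := mul_self_eq_zero.1 e3
      nlinarith
  · refine ⟨formsG, Or.inr (Or.inr rfl), roots_eq_of_bound hΦ hA hb _ ?_ ?_⟩
    · have c11 : comb α β (1, 1) ∈ Φ := refl (0, 1) (1, 0) (1, 1) (-1) c01 c10
        (by norm_num) (by norm_num) (by norm_num)
      have c31 : comb α β (3, 1) ∈ Φ := refl (1, 0) (0, 1) (3, 1) (-3) c10 c01
        (by norm_num) (by norm_num) (by norm_num)
      have c21 : comb α β (2, 1) ∈ Φ := refl (1, 0) (1, 1) (2, 1) (-1) c10 c11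
        (by norm_num) (by norm_num) (by norm_num)
      have c32 : comb α β (3, 2) ∈ Φ := refl (0, 1) (3, 1) (3, 2) (-1) c01 c31
        (by norm_num) (by norm_num) (by norm_num)
      simp only [formsG, Finset.mem_insert, Finset.mem_singleton]
      rintro d (rfl | rfl | rfl | rfl | rfl | rfl) <;> assumption
    · intro x y h
      have h1 := h (1, 0) (by decide)
      have h2 := h (0, 1) (by decide)
      have h3 := h (1, 1) (by decide)
      have h4 := h (2, 1) (by decide)
      have h5 := h (3, 1) (by decide)
      have h6 := h (3, 2) (by decide)
      norm_num at h1 h2 h3 h4 h5 h6 ⊢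
      -- With `R = |v|²`, the pair `(X, Z / √3)` is `R (cos 2θ, sin 2θ)`; the six inequalities
      -- confine it to a hexagon of circumradius less than `R`.
      set R : ℝ := x * x - 3 / 2 * (x * y + x * y) + 3 * (y * y) with hR
      obtain ⟨X, hX⟩ : ∃ X : ℝ, X = ((2 * x - 3 * y) ^ 2 - 3 * y ^ 2) / 4 := ⟨_, rfl⟩
      obtain ⟨Z, hZ⟩ : ∃ Z : ℝ, Z = 3 * (2 * x - 3 * y) * y / 2 := ⟨_, rfl⟩
      have b1 : 2 * X ≤ R := by nlinarith
      have b2 : -R ≤ 2 * X := by nlinarith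
      have b3 : X + Z ≤ R := by nlinarith
      have b4 : X - Z ≤ R := by nlinarith
      have b5 : -R ≤ X + Z := by nlinarith
      have b6 : -R ≤ X - Z := by nlinarith
      have id1 : 3 * X ^ 2 + Z ^ 2 = 3 * R ^ 2 := by rw [hX, hZ, hR]; ring
      have hZ2 : Z ^ 2 ≤ R ^ 2 := by nlinarith
      have hX2 : 4 * X ^ 2 ≤ R ^ 2 := by nlinarith
      nlinarith [sq_nonneg R]

end roots

/-! ### From affine hyperplanes to integral keys -/

lemma eval_affForm (γ v : Fin 2 → ℝ) (j : ℤ) :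
    MvPolynomial.eval v (affForm γ j) = rdot γ v - j := by
  simp [affForm, rdot]

lemma affForm_injective {γ γ' : Fin 2 → ℝ} {j j' : ℤ} (h : affForm γ j = affForm γ' j') :
    γ = γ' ∧ j = j' := by
  have hv : ∀ v, rdot γ v - j = rdot γ' v - j' := fun v => by
    rw [← eval_affForm, ← eval_affForm, h]
  have hj : (j : ℝ) = j' := by
    have := hv 0
    simp only [rdot_two, Pi.zero_apply, mul_zero, add_zero, zero_sub, neg_inj] at this
    exact this
  refine ⟨?_, by exact_mod_cast hj⟩
  ext i
  have := hv (Pi.single i 1)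
  rw [hj, sub_left_inj] at this
  simpa [rdot, Pi.single_apply] using this

/-- The homogeneous linear polynomial with coefficient vector `γ`. -/
noncomputable def linForm : (Fin 2 → ℝ) →ₗ[ℝ] MvPolynomial (Fin 2) ℝ where
  toFun γ := ∑ i, MvPolynomial.C (γ i) * MvPolynomial.X i
  map_add' x y := by simp [add_mul, Finset.sum_add_distrib]
  map_smul' c x := by
    simp only [Pi.smul_apply, smul_eq_mul, map_mul, Finset.smul_sum, MvPolynomial.smul_eq_C_mul,
      mul_assoc, RingHom.id_apply]

lemma linForm_injective : Function.Injective linForm := by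
  intro γ γ' h
  have h' : affForm γ 0 = affForm γ' 0 := by
    simp only [affForm]
    exact congrArg (fun p => p - MvPolynomial.C ((0 : ℤ) : ℝ)) h
  exact (affForm_injective h').1

lemma affForm_sub_constantCoeff (γ : Fin 2 → ℝ) (j : ℤ) :
    affForm γ j - MvPolynomial.C (MvPolynomial.constantCoeff (affForm γ j)) = linForm γ := by
  simp [affForm, linForm]

/-- The hyperplane of the key `q` for the basis `α, β`, written with the sign `ε` on its form. -/
noncomputable def keyForm (α β : Fin 2 → ℝ) (ε : ℤ × ℤ → ℤ) (q : ℤ × ℤ × ℤ) :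
    MvPolynomial (Fin 2) ℝ :=
  affForm ((ε (q.1, q.2.1) : ℝ) • comb α β (q.1, q.2.1)) (ε (q.1, q.2.1) * q.2.2)

lemma rdet_comb (α β : Fin 2 → ℝ) (d e : ℤ × ℤ) :
    rdet (comb α β d) (comb α β e) = idet d e * rdet α β := by
  simp only [rdet, comb, idet, Pi.add_apply, Pi.smul_apply, smul_eq_mul]
  push_cast
  ring

lemma eval_keyForm {α β : Fin 2 → ℝ} {ε : ℤ × ℤ → ℤ} {q : ℤ × ℤ × ℤ}
    (hε : ε (q.1, q.2.1) ≠ 0) (v : Fin 2 → ℝ) :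
    MvPolynomial.eval v (keyForm α β ε q) = 0 ↔ LineInc q (rdot α v, rdot β v) := by
  rw [keyForm, eval_affForm]
  have h : rdot ((ε (q.1, q.2.1) : ℝ) • comb α β (q.1, q.2.1)) v
      - ((ε (q.1, q.2.1) * q.2.2 : ℤ) : ℝ)
      = ε (q.1, q.2.1) * ((q.1 : ℝ) * rdot α v + (q.2.1 : ℝ) * rdot β v - q.2.2) := by
    simp only [rdot_two, comb, Pi.add_apply, Pi.smul_apply, smul_eq_mul]
    push_cast
    ring
  have hε' : (ε (q.1, q.2.1) : ℝ) ≠ 0 := by exact_mod_cast hε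
  rw [h, mul_eq_zero, or_iff_right hε', sub_eq_zero]
  rfl

lemma keyForm_injOn {α β : Fin 2 → ℝ} (hd : rdet α β ≠ 0) {ε : ℤ × ℤ → ℤ} {L : Finset (ℤ × ℤ)}
    (hL : GoodForms L) (hε : ∀ d ∈ L, ε d ≠ 0) {q q' : ℤ × ℤ × ℤ} (hq : (q.1, q.2.1) ∈ L)
    (hq' : (q'.1, q'.2.1) ∈ L) (h : keyForm α β ε q = keyForm α β ε q') : q = q' := by
  obtain ⟨h1, h2⟩ := affForm_injective h
  have e0 : (ε (q.1, q.2.1) : ℝ) ≠ 0 := by exact_mod_cast hε _ hq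
  have e0' : (ε (q'.1, q'.2.1) : ℝ) ≠ 0 := by exact_mod_cast hε _ hq'
  have hform : (q.1, q.2.1) = (q'.1, q'.2.1) := by
    by_contra hne
    have hi : (idet (q.1, q.2.1) (q'.1, q'.2.1) : ℝ) ≠ 0 := by
      exact_mod_cast (hL.2 _ hq _ hq' hne).1
    have hr := rdet_comb α β (q.1, q.2.1) (q'.1, q'.2.1)
    have hz : (ε (q.1, q.2.1) : ℝ) * rdet (comb α β (q.1, q.2.1)) (comb α β (q'.1, q'.2.1)) = 0 := by
      have a0 := congrFun h1 0
      have a1 := congrFun h1 1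
      simp only [Pi.smul_apply, smul_eq_mul] at a0 a1
      simp only [rdet]
      linear_combination comb α β (q'.1, q'.2.1) 1 * a0 - comb α β (q'.1, q'.2.1) 0 * a1
    rw [hr] at hz
    exact (mul_ne_zero e0 (mul_ne_zero hi hd)) hz
  rw [← hform] at h2
  have h3 := mul_left_cancel₀ (hε _ hq) h2
  obtain ⟨a, b, c⟩ := q
  obtain ⟨a', b', c'⟩ := q'
  simp only [Prod.mk.injEq] at hform h3 ⊢
  exact ⟨hform.1, hform.2, h3⟩

/-- A central family of distinct keys has rank `min |B| 2`. -/
lemma finrank_keyForms {α β : Fin 2 → ℝ} (hd : rdet α β ≠ 0) {ε : ℤ × ℤ → ℤ}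
    {L : Finset (ℤ × ℤ)} (hL : GoodForms L) (hε : ∀ d ∈ L, ε d ≠ 0) (B : Finset (ℤ × ℤ × ℤ))
    (hB : ∀ q ∈ B, (q.1, q.2.1) ∈ L) (hc : ∃ p, ∀ q ∈ B, LineInc q p) :
    Module.finrank ℝ (Submodule.span ℝ ((fun q : ℤ × ℤ × ℤ =>
      (ε (q.1, q.2.1) : ℝ) • comb α β (q.1, q.2.1)) '' (B : Set (ℤ × ℤ × ℤ))))
      = min B.card 2 := by
  have hr : ∀ q q' : ℤ × ℤ × ℤ, rdet ((ε (q.1, q.2.1) : ℝ) • comb α β (q.1, q.2.1))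
      ((ε (q'.1, q'.2.1) : ℝ) • comb α β (q'.1, q'.2.1))
      = ε (q.1, q.2.1) * ε (q'.1, q'.2.1) * (idet (q.1, q.2.1) (q'.1, q'.2.1) * rdet α β) := by
    intro q q'
    rw [← rdet_comb]
    simp only [rdet, Pi.smul_apply, smul_eq_mul]
    ring
  rcases B.eq_empty_or_nonempty with rfl | hne
  · simp
  rcases hne.exists_eq_singleton_or_nontrivial with ⟨q, rfl⟩ | hnt
  · rw [Finset.coe_singleton, Set.image_singleton, finrank_span_singleton]
    · simp
    · have hq := hB q (Finset.mem_singleton_self q)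
      have e0 : (ε (q.1, q.2.1) : ℝ) ≠ 0 := by exact_mod_cast hε _ hq
      refine smul_ne_zero e0 ?_
      intro h0
      apply hL.1 _ hq
      have a0 := rdet_comb α β (q.1, q.2.1) (0, 1)
      have a1 := rdet_comb α β (q.1, q.2.1) (1, 0)
      rw [h0] at a0 a1
      simp only [rdet, Pi.zero_apply, idet] at a0 a1
      rw [← rdet] at a0 a1
      have b0 : (q.1 : ℝ) = 0 := by
        apply (mul_eq_zero.1 _).resolve_right hd
        push_cast at a0
        linarith
      have b1 : (q.2.1 : ℝ) = 0 := by
        apply (mul_eq_zero.1 _).resolve_right hd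
        push_cast at a1
        linarith
      simp only [Prod.mk.injEq]
      exact ⟨by exact_mod_cast b0, by exact_mod_cast b1⟩
  · obtain ⟨q, hq, q', hq', hqq⟩ := hnt
    have hq' := Finset.mem_coe.1 hq'
    have hq := Finset.mem_coe.1 hq
    -- Two distinct lines with a common point are not parallel.
    have hform : (q.1, q.2.1) ≠ (q'.1, q'.2.1) := by
      obtain ⟨p, hp⟩ := hc
      intro he
      apply hqq
      have h1 := hp q hq
      have h2 := hp q' hq'
      obtain ⟨a, b, c⟩ := q
      obtain ⟨a', b', c'⟩ := q'
      simp only [Prod.mk.injEq] at he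
      obtain ⟨rfl, rfl⟩ := he
      simp only [LineInc] at h1 h2
      have : (c : ℝ) = c' := by rw [← h1, ← h2]
      simpa using this
    have hdet := hr q q'
    have hne0 : rdet ((ε (q.1, q.2.1) : ℝ) • comb α β (q.1, q.2.1))
      ((ε (q'.1, q'.2.1) : ℝ) • comb α β (q'.1, q'.2.1)) ≠ 0 := by
      rw [hdet]
      have e0 : (ε (q.1, q.2.1) : ℝ) ≠ 0 := by exact_mod_cast hε _ (hB q hq)
      have e0' : (ε (q'.1, q'.2.1) : ℝ) ≠ 0 := by exact_mod_cast hε _ (hB q' hq')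
      have hi : (idet (q.1, q.2.1) (q'.1, q'.2.1) : ℝ) ≠ 0 := by
        exact_mod_cast (hL.2 _ (hB q hq) _ (hB q' hq') hform).1
      exact mul_ne_zero (mul_ne_zero e0 e0') (mul_ne_zero hi hd)
    have htop : Submodule.span ℝ ((fun q : ℤ × ℤ × ℤ =>
      (ε (q.1, q.2.1) : ℝ) • comb α β (q.1, q.2.1)) '' (B : Set (ℤ × ℤ × ℤ))) = ⊤ := by
      rw [eq_top_iff]
      rintro v -
      obtain ⟨x, y, rfl⟩ := exists_coords hne0 v
      exact Submodule.add_mem _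
        (Submodule.smul_mem _ _ (Submodule.subset_span ⟨q, Finset.mem_coe.2 hq, rfl⟩))
        (Submodule.smul_mem _ _ (Submodule.subset_span ⟨q', Finset.mem_coe.2 hq', rfl⟩))
    rw [htop, finrank_top]
    have hcard : 2 ≤ B.card :=
      Finset.one_lt_card.2 ⟨q, hq, q', hq', hqq⟩
    simp [hcard]

/-- The characteristic polynomial of an arrangement given by integral keys is its Whitney sum. -/
lemma charPolyAffine_keyForm {α β : Fin 2 → ℝ} (hd : rdet α β ≠ 0) {ε : ℤ × ℤ → ℤ}
    {L : Finset (ℤ × ℤ)} (hL : GoodForms L) (hε : ∀ d ∈ L, ε d ≠ 0) (S : Finset (ℤ × ℤ × ℤ))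
    (hS : ∀ q ∈ S, (q.1, q.2.1) ∈ L) (A : Finset (MvPolynomial (Fin 2) ℝ))
    (hA : ∀ p, p ∈ A ↔ ∃ q ∈ S, keyForm α β ε q = p) :
    charPolyAffine 2 ℝ A = incChi LineInc S := by
  classical
  have hinj : Set.InjOn (keyForm α β ε) (S : Set (ℤ × ℤ × ℤ)) := fun q hq q' hq' h =>
    keyForm_injOn hd hL hε (hS q hq) (hS q' hq') h
  unfold charPolyAffine incChi
  symm
  refine Finset.sum_bij' (fun B _ => B.image (keyForm α β ε))
    (fun B _ => S.filter fun q => keyForm α β ε q ∈ B) ?_ ?_ ?_ ?_ ?_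
  · intro B hB
    refine Finset.mem_powerset.2 fun p hp => ?_
    obtain ⟨q, hq, rfl⟩ := Finset.mem_image.1 hp
    exact (hA _).2 ⟨q, Finset.mem_powerset.1 hB hq, rfl⟩
  · intro B hB
    exact Finset.mem_powerset.2 (Finset.filter_subset _ _)
  · intro B hB
    have hB := Finset.mem_powerset.1 hB
    ext q
    simp only [Finset.mem_filter, Finset.mem_image]
    constructor
    · rintro ⟨hq, q', hq', he⟩
      rwa [← hinj (hB hq') hq he]
    · intro hq
      exact ⟨hB hq, q, hq, rfl⟩
  · intro B hB
    have hB := Finset.mem_powerset.1 hB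
    ext p
    simp only [Finset.mem_filter, Finset.mem_image]
    constructor
    · rintro ⟨q, ⟨-, hq⟩, rfl⟩
      exact hq
    · intro hp
      obtain ⟨q, hq, rfl⟩ := (hA p).1 (hB hp)
      exact ⟨q, ⟨hq, hp⟩, rfl⟩
  · intro B hB
    have hB := Finset.mem_powerset.1 hB
    have hcen : (∃ p, ∀ q ∈ B, LineInc q p) ↔
        ∃ v, ∀ p ∈ B.image (keyForm α β ε), MvPolynomial.eval v p = 0 := by
      simp only [Finset.forall_mem_image]
      constructor
      · rintro ⟨⟨x, y⟩, hp⟩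
        refine ⟨![(x * β 1 - y * α 1) / rdet α β, (y * α 0 - x * β 0) / rdet α β], ?_⟩
        intro q hq
        rw [eval_keyForm (hε _ (hS q (hB hq)))]
        convert hp q hq using 2
        · rw [rdot_two]
          simp only [Matrix.cons_val_zero, Matrix.cons_val_one]
          field_simp
          simp only [rdet]
          ring
        · rw [rdot_two]
          simp only [Matrix.cons_val_zero, Matrix.cons_val_one]
          field_simp
          simp only [rdet]
          ring
      · rintro ⟨v, hv⟩
        exact ⟨_, fun q hq => (eval_keyForm (hε _ (hS q (hB hq))) v).1 (hv hq)⟩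
    by_cases h : ∃ p, ∀ q ∈ B, LineInc q p
    · rw [if_pos h, if_pos (hcen.1 h), Finset.card_image_of_injOn (hinj.mono hB)]
      have hfr := finrank_keyForms hd hL hε B (fun q hq => hS q (hB hq)) h
      rw [(Submodule.equivMapOfInjective linForm linForm_injective _).finrank_eq,
        Submodule.map_span, Set.image_image] at hfr
      have himg : (((B.image (keyForm α β ε)).image fun p =>
          p - MvPolynomial.C (MvPolynomial.constantCoeff p) :
            Finset (MvPolynomial (Fin 2) ℝ)) : Set (MvPolynomial (Fin 2) ℝ))
          = (fun q : ℤ × ℤ × ℤ => linForm ((ε (q.1, q.2.1) : ℝ) • comb α β (q.1, q.2.1))) ''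
            (B : Set (ℤ × ℤ × ℤ)) := by
        rw [Finset.coe_image, Finset.coe_image, Set.image_image]
        exact Set.image_congr fun q _ => affForm_sub_constantCoeff _ _
      rw [himg, hfr]
    · rw [if_neg h, if_neg (mt hcen.2 h)]


/-! ### Sign choices -/

/-- The sign choice `± d` recorded by the set `D` of forms that keep their sign. -/
def signed (D : Finset (ℤ × ℤ)) (d : ℤ × ℤ) : ℤ × ℤ := if d ∈ D then d else -d

/-- A sign choice for which the positive vectors are those of a basis `u, w` of simple roots. -/
def StandardSigns (L D : Finset (ℤ × ℤ)) : Prop :=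
  ∃ u ∈ L.image (signed D), ∃ w ∈ L.image (signed D), idet u w ≠ 0 ∧
    (L.image fun d => (d.1 * u.1 + d.2 * w.1, d.1 * u.2 + d.2 * w.2)) = L.image (signed D)

/-- A sign choice that is contained in no half plane: the negative of every chosen vector lies in the
cone spanned by two chosen vectors. -/
def NonpointedSigns (L D : Finset (ℤ × ℤ)) : Prop :=
  ∀ e ∈ L.image (signed D), ∃ u ∈ L.image (signed D), ∃ w ∈ L.image (signed D),
    0 < idet u w ∧ idet u e ≤ 0 ∧ idet e w ≤ 0

instance (L D : Finset (ℤ × ℤ)) : Decidable (StandardSigns L D) := by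
  unfold StandardSigns; infer_instance

instance (L D : Finset (ℤ × ℤ)) : Decidable (NonpointedSigns L D) := by
  unfold NonpointedSigns; infer_instance

lemma signs_A : ∀ D ∈ formsA.powerset, StandardSigns formsA D ∨ NonpointedSigns formsA D := by
  decide +kernel

lemma signs_B : ∀ D ∈ formsB.powerset, StandardSigns formsB D ∨ NonpointedSigns formsB D := by
  decide +kernel

lemma signs_G : ∀ D ∈ formsG.powerset, StandardSigns formsG D ∨ NonpointedSigns formsG D := by
  decide +kernel

/-! ### The interpolating arrangement -/

lemma comb_injective {α β : Fin 2 → ℝ} (hd : rdet α β ≠ 0) : Function.Injective (comb α β) := by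
  intro d e h
  have h0 : rdet (comb α β d) β = rdet (comb α β e) β := by rw [h]
  have h1 : rdet α (comb α β d) = rdet α (comb α β e) := by rw [h]
  have e0 : (d.1 : ℝ) = e.1 := by
    apply mul_right_cancel₀ hd
    simp only [rdet, comb, Pi.add_apply, Pi.smul_apply, smul_eq_mul] at h0 ⊢
    linear_combination h0
  have e1 : (d.2 : ℝ) = e.2 := by
    apply mul_right_cancel₀ hd
    simp only [rdet, comb, Pi.add_apply, Pi.smul_apply, smul_eq_mul] at h1 ⊢
    linear_combination h1
  exact Prod.ext (by exact_mod_cast e0) (by exact_mod_cast e1)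

/-- The characteristic polynomial in coordinates. A form whose sign is changed must lie in `D`: its
levels `-m, …, m` are then symmetric, so the sign is immaterial. -/
lemma charPoly_of_coords {α β : Fin 2 → ℝ} (hd : rdet α β ≠ 0) {L D : Finset (ℤ × ℤ)}
    (hL : GoodForms L) (hf : ∀ m : ℤ, 0 ≤ m → StageFormula L L.card m) (hDL : D ⊆ L)
    (hDne : D.Nonempty) (hDid : ∀ d ∈ D, ∀ e ∈ L, e.1 ≤ d.1 → e.2 ≤ d.2 → e ∈ D)
    (ε : ℤ × ℤ → ℤ) (hε : ∀ d ∈ L, ε d = 1 ∨ (ε d = -1 ∧ d ∈ D))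
    {Φplus Ψ₀ : Finset (Fin 2 → ℝ)}
    (hP : ∀ v, v ∈ Φplus ↔ ∃ d ∈ L, (ε d : ℝ) • comb α β d = v)
    (hΨ : ∀ v, v ∈ Ψ₀ ↔ ∃ d ∈ D, (ε d : ℝ) • comb α β d = v) (hcard : Ψ₀.card = D.card)
    (m : ℕ) (A : Finset (MvPolynomial (Fin 2) ℝ))
    (hA : ∀ p, p ∈ A ↔ (∃ v ∈ Φplus, ∃ j : ℤ, 1 - (m : ℤ) ≤ j ∧ j ≤ m ∧ affForm v j = p) ∨
      ∃ v ∈ Ψ₀, affForm v (-(m : ℤ)) = p) :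
    charPolyAffine 2 ℝ A
      = ((Polynomial.X : Polynomial ℤ) - Polynomial.C (1 + (m : ℤ) * L.card)) *
        ((Polynomial.X : Polynomial ℤ) - Polynomial.C (((Ψ₀.card : ℤ) - 1) + (m : ℤ) * L.card)) := by
  have hε0 : ∀ d ∈ L, ε d ≠ 0 := fun d hd => by
    rcases hε d hd with h | ⟨h, -⟩ <;> rw [h] <;> norm_num
  have hmem : ∀ (a b j : ℤ), (a, b, j) ∈ stage L D ∅ m ↔
      (a, b) ∈ L ∧ (if (a, b) ∈ D then -(m : ℤ) else 1 - m) ≤ j ∧ j ≤ m := by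
    intro a b j
    simp only [stage, mem_arr, Finset.notMem_empty, if_false]
  have hchi := (hf m (by positivity) (hasChi_stage hf m)).1 D hDL hDne hDid
  unfold HasChi at hchi
  rw [charPolyAffine_keyForm hd hL hε0 (stage L D ∅ m) (fun q hq => (mem_arr.1 hq).1) A ?_, hchi,
    hcard]
  · simp only [map_add, map_sub, map_mul, map_one, map_pow, map_ofNat]
    ring
  intro p
  rw [hA p]
  constructor
  · rintro (⟨v, hv, j, hj1, hj2, rfl⟩ | ⟨v, hv, rfl⟩)
    · obtain ⟨⟨a, b⟩, hdL, rfl⟩ := (hP v).1 hv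
      refine ⟨(a, b, ε (a, b) * j), (hmem _ _ _).2 ⟨hdL, ?_⟩, ?_⟩
      · rcases hε _ hdL with h | ⟨h, hD⟩
        · rw [h]; split_ifs <;> omega
        · rw [h, if_pos hD]; omega
      · simp only [keyForm]
        congr 1
        rcases hε _ hdL with h | ⟨h, hD⟩ <;> rw [h] <;> ring
    · obtain ⟨⟨a, b⟩, hdD, rfl⟩ := (hΨ v).1 hv
      have hdL := hDL hdD
      refine ⟨(a, b, ε (a, b) * -(m : ℤ)), (hmem _ _ _).2 ⟨hdL, ?_⟩, ?_⟩
      · rw [if_pos hdD]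
        rcases hε _ hdL with h | ⟨h, hD⟩ <;> rw [h] <;> omega
      · simp only [keyForm]
        congr 1
        rcases hε _ hdL with h | ⟨h, hD⟩ <;> rw [h] <;> ring
  · rintro ⟨⟨a, b, j⟩, hq, rfl⟩
    obtain ⟨hdL, h1, h2⟩ := (hmem _ _ _).1 hq
    simp only [keyForm]
    by_cases hj : ε (a, b) * j = -(m : ℤ)
    · right
      have hD : (a, b) ∈ D := by
        by_contra hD
        rw [if_neg hD] at h1
        rcases hε _ hdL with h | ⟨-, h⟩
        · rw [h] at hj; omega
        · exact hD h
      exact ⟨_, (hΨ _).2 ⟨(a, b), hD, rfl⟩, by rw [hj]⟩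
    · left
      refine ⟨_, (hP _).2 ⟨(a, b), hdL, rfl⟩, _, ?_, ?_, rfl⟩
      · rcases hε _ hdL with h | ⟨h, -⟩ <;> rw [h] at hj ⊢ <;> split_ifs at h1 <;> omega
      · rcases hε _ hdL with h | ⟨h, -⟩ <;> rw [h] at hj ⊢ <;> split_ifs at h1 <;> omega

/-- Nonnegative integral combinations of `Δ`. -/
def InCone (Δ : Finset (Fin 2 → ℝ)) (v : Fin 2 → ℝ) : Prop :=
  ∃ c : (Fin 2 → ℝ) → ℕ, v = ∑ δ ∈ Δ, (c δ : ℝ) • δ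

lemma InCone.add {Δ : Finset (Fin 2 → ℝ)} {v w : Fin 2 → ℝ} (hv : InCone Δ v) (hw : InCone Δ w) :
    InCone Δ (v + w) := by
  obtain ⟨c, rfl⟩ := hv
  obtain ⟨c', rfl⟩ := hw
  refine ⟨c + c', ?_⟩
  simp [add_smul, Finset.sum_add_distrib]

lemma InCone.smul {Δ : Finset (Fin 2 → ℝ)} {v : Fin 2 → ℝ} (hv : InCone Δ v) {n : ℤ} (hn : 0 ≤ n) :
    InCone Δ ((n : ℝ) • v) := by
  obtain ⟨c, rfl⟩ := hv
  obtain ⟨k, rfl⟩ := Int.eq_ofNat_of_zero_le hn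
  refine ⟨fun δ => k * c δ, ?_⟩
  simp [Finset.smul_sum, mul_smul]

/-- The theorem in coordinates given by the classification. -/
lemma charPoly_of_type {Φ Φplus Δ : Finset (Fin 2 → ℝ)} {α β : Fin 2 → ℝ} (hd : rdet α β ≠ 0)
    {L : Finset (ℤ × ℤ)} (hL : GoodForms L) (hLne : L.Nonempty)
    (hf : ∀ m : ℤ, 0 ≤ m → StageFormula L L.card m)
    (hs : ∀ D ∈ L.powerset, StandardSigns L D ∨ NonpointedSigns L D)
    (hΦ : ∀ v, v ∈ Φ ↔ ∃ d ∈ L, v = comb α β d ∨ v = -comb α β d)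
    (hpos : Φ = Φplus ∪ Φplus.image (fun α => -α))
    (hdisj : ∀ α ∈ Φplus, -α ∉ Φplus)
    (hcone : ∀ α ∈ Φplus, InCone Δ α)
    (h : ℕ) (hcox : 2 * h = Φ.card)
    (Ψ₀ : Finset (Fin 2 → ℝ)) (hΨsub : Ψ₀ ⊆ Φplus) (hΨne : Ψ₀.Nonempty)
    (hideal : ∀ β ∈ Ψ₀, ∀ α ∈ Φplus, InCone Δ (β - α) → α ∈ Ψ₀)
    (m : ℕ) (A : Finset (MvPolynomial (Fin 2) ℝ))
    (hA : ∀ p, p ∈ A ↔ (∃ v ∈ Φplus, ∃ j : ℤ, 1 - (m : ℤ) ≤ j ∧ j ≤ m ∧ affForm v j = p) ∨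
      ∃ v ∈ Ψ₀, affForm v (-(m : ℤ)) = p) :
    charPolyAffine 2 ℝ A
      = ((Polynomial.X : Polynomial ℤ) - Polynomial.C (1 + (m : ℤ) * h)) *
        ((Polynomial.X : Polynomial ℤ) - Polynomial.C (((Ψ₀.card : ℤ) - 1) + (m : ℤ) * h)) := by
  classical
  set D₀ := L.filter fun d => comb α β d ∈ Φplus with hD₀
  have hneg : ∀ d, comb α β (-d) = -comb α β d := by
    intro d
    simp only [comb, Prod.fst_neg, Prod.snd_neg, Int.cast_neg]
    module
  -- The positive roots are the vectors `comb (signed D₀ d)`.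
  have hsg : ∀ d ∈ L, comb α β (signed D₀ d) ∈ Φplus := by
    intro d hdL
    by_cases hdP : comb α β d ∈ Φplus
    · rwa [signed, if_pos (Finset.mem_filter.2 ⟨hdL, hdP⟩)]
    · have hdD : d ∉ D₀ := by
        intro h'
        rw [hD₀, Finset.mem_filter] at h'
        exact hdP h'.2
      rw [signed, if_neg hdD, hneg]
      have hm := (hΦ _).2 ⟨d, hdL, Or.inl rfl⟩
      rw [hpos, Finset.mem_union, Finset.mem_image] at hm
      obtain ⟨v, hv, hve⟩ := hm.resolve_left hdP
      rwa [← hve, neg_neg]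
  have hP : ∀ v, v ∈ Φplus ↔ ∃ d ∈ L, comb α β (signed D₀ d) = v := by
    intro v
    constructor
    · intro hv
      have hvΦ : v ∈ Φ := by rw [hpos]; exact Finset.mem_union_left _ hv
      obtain ⟨d, hdL, rfl | rfl⟩ := (hΦ v).1 hvΦ
      · exact ⟨d, hdL, by rw [signed, if_pos (Finset.mem_filter.2 ⟨hdL, hv⟩)]⟩
      · refine ⟨d, hdL, ?_⟩
        rw [signed, if_neg, hneg]
        intro h'
        exact hdisj _ (Finset.mem_filter.1 h').2 hv
    · rintro ⟨d, hdL, rfl⟩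
      exact hsg d hdL
  have hsinj : Set.InjOn (signed D₀) (L : Set (ℤ × ℤ)) := by
    intro d hdL e heL hde
    by_contra hne
    apply (hL.2 d hdL e heL hne).1
    have hse : d = e ∨ d = -e := by
      simp only [signed] at hde
      split_ifs at hde
      · exact Or.inl hde
      · exact Or.inr hde
      · exact Or.inr (by rw [← hde, neg_neg])
      · exact Or.inl (neg_injective hde)
    rcases hse with h' | h'
    · exact absurd h' hne
    · rw [h']
      simp only [idet, Prod.fst_neg, Prod.snd_neg]
      ring
  have hPimg : Φplus = (L.image (signed D₀)).image (comb α β) := by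
    ext v
    rw [hP v, Finset.image_image, Finset.mem_image]
    rfl
  have hPcard : Φplus.card = L.card := by
    rw [hPimg, Finset.card_image_of_injective _ (comb_injective hd),
      Finset.card_image_of_injOn hsinj]
  have hh : h = L.card := by
    have hdis : Disjoint Φplus (Φplus.image fun α => -α) := by
      rw [Finset.disjoint_left]
      intro v hv hv'
      obtain ⟨w, hw, rfl⟩ := Finset.mem_image.1 hv'
      exact hdisj w hw hv
    rw [hpos, Finset.card_union_of_disjoint hdis, Finset.card_image_of_injective _ neg_injective]
      at hcox
    omega
  rw [hh]
  have hPmem : ∀ e ∈ L.image (signed D₀), comb α β e ∈ Φplus := fun e he => by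
    rw [hPimg]; exact Finset.mem_image_of_mem _ he
  rcases hs D₀ (Finset.mem_powerset.2 (Finset.filter_subset _ _)) with
    ⟨u, hu, w, hw, huw, himg⟩ | hnp
  · have hd' : rdet (comb α β u) (comb α β w) ≠ 0 := by
      rw [rdet_comb]
      exact mul_ne_zero (by exact_mod_cast huw) hd
    have hcc : ∀ d : ℤ × ℤ, comb (comb α β u) (comb α β w) d
        = comb α β (d.1 * u.1 + d.2 * w.1, d.1 * u.2 + d.2 * w.2) := by
      intro d
      simp only [comb]
      push_cast
      module
    have hP' : ∀ v, v ∈ Φplus ↔ ∃ d ∈ L, comb (comb α β u) (comb α β w) d = v := by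
      intro v
      rw [hPimg, ← himg, Finset.image_image, Finset.mem_image]
      simp only [hcc, Function.comp_apply]
    have hinj' := comb_injective hd'
    set D := L.filter fun d => comb (comb α β u) (comb α β w) d ∈ Ψ₀ with hD
    have hΨ' : Ψ₀ = D.image (comb (comb α β u) (comb α β w)) := by
      ext v
      rw [Finset.mem_image]
      constructor
      · intro hv
        obtain ⟨d, hdL, rfl⟩ := (hP' v).1 (hΨsub hv)
        exact ⟨d, Finset.mem_filter.2 ⟨hdL, hv⟩, rfl⟩
      · rintro ⟨d, hdD, rfl⟩
        exact (Finset.mem_filter.1 hdD).2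
    have hDL : D ⊆ L := hD ▸ Finset.filter_subset _ _
    refine charPoly_of_coords (D := D) hd' hL hf hDL ?_ ?_ (fun _ => 1)
      (fun d _ => Or.inl rfl) ?_ ?_ ?_ m A hA
    · rw [hΨ'] at hΨne
      exact Finset.image_nonempty.1 hΨne
    · intro d hdD e heL h1 h2
      obtain ⟨hdL, hdΨ⟩ := Finset.mem_filter.1 hdD
      refine Finset.mem_filter.2 ⟨heL, hideal _ hdΨ _ ((hP' _).2 ⟨e, heL, rfl⟩) ?_⟩
      have hsub : comb (comb α β u) (comb α β w) d - comb (comb α β u) (comb α β w) e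
          = ((d.1 - e.1 : ℤ) : ℝ) • comb α β u + ((d.2 - e.2 : ℤ) : ℝ) • comb α β w := by
        generalize comb α β u = α', comb α β w = β'
        simp only [comb]
        push_cast
        module
      rw [hsub]
      exact ((hcone _ (hPmem u hu)).smul (by omega)).add ((hcone _ (hPmem w hw)).smul (by omega))
    · intro v
      simp only [hP' v, Int.cast_one, one_smul]
    · intro v
      simp only [Int.cast_one, one_smul]
      nth_rewrite 1 [hΨ']
      rw [Finset.mem_image]
    · nth_rewrite 1 [hΨ']
      exact Finset.card_image_of_injective _ hinj'
  · -- Here the cone contains the negatives of all positive roots, so the only ideal is everything.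
    have hnegcone : ∀ v ∈ Φplus, InCone Δ (-v) := by
      intro v hv
      rw [hPimg] at hv
      obtain ⟨e, he, rfl⟩ := Finset.mem_image.1 hv
      obtain ⟨u, hu, w, hw, h1, h2, h3⟩ := hnp e he
      -- Cramer's rule: `idet u w • e = idet e w • u + idet u e • w`.
      have hcr : -comb α β e = ((idet u w - 1 : ℤ) : ℝ) • comb α β e
          + (((-idet e w : ℤ) : ℝ) • comb α β u + ((-idet u e : ℤ) : ℝ) • comb α β w) := by
        ext i
        simp only [comb, idet, Pi.add_apply, Pi.smul_apply, Pi.neg_apply, smul_eq_mul]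
        push_cast
        ring
      rw [hcr]
      exact ((hcone _ (hPmem e he)).smul (by omega)).add
        (((hcone _ (hPmem u hu)).smul (by omega)).add ((hcone _ (hPmem w hw)).smul (by omega)))
    have hΨP : Ψ₀ = Φplus := by
      refine Finset.Subset.antisymm hΨsub fun v hv => ?_
      obtain ⟨b, hb⟩ := hΨne
      refine hideal b hb v hv ?_
      rw [sub_eq_add_neg]
      exact (hcone b (hΨsub hb)).add (hnegcone v hv)
    subst hΨP
    have hsig : ∀ d, ((if d ∈ D₀ then (1 : ℤ) else -1 : ℤ) : ℝ) • comb α β d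
        = comb α β (signed D₀ d) := by
      intro d
      rw [signed]
      split_ifs
      · simp
      · rw [hneg]; simp
    refine charPoly_of_coords hd hL hf (Finset.Subset.refl L) hLne (fun _ _ e he _ _ => he)
      (fun d => if d ∈ D₀ then 1 else -1) ?_ ?_ ?_ hPcard m A hA
    · intro d hdL
      by_cases hdD : d ∈ D₀
      · exact Or.inl (if_pos hdD)
      · exact Or.inr ⟨if_neg hdD, hdL⟩
    · intro v
      simp only [hsig, hP v]
    · intro v
      simp only [hsig, hP v]

/-- Let `Φ₀` be an irreducible crystallographic root system of
rank two (type `A₂`, `B₂` or `G₂`) with positive system `Φ₀⁺` determined by the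
simple roots `Δ`, and Coxeter number `h` (`2h = |Φ₀|`).  Let `Ψ₀ ⊆ Φ₀⁺` be a
nonempty order ideal in the root poset (`α ≤ β` iff `β - α` is a nonnegative
combination of simple roots), and set `e'_1 = 1`, `e'_2 = |Ψ₀| - 1`.  Then the
characteristic polynomial of the affine arrangement
`A(Φ₀⁺, Ψ₀, m) = {H_{α,j} : α ∈ Φ₀⁺, 1-m ≤ j ≤ m} ∪ {H_{α,-m} : α ∈ Ψ₀}`
equals `(t - e'_1 - mh)(t - e'_2 - mh)`. -/
theorem charPoly_interpolating_arrangement_rank_two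
    (Φ Φplus Δ : Finset (Fin 2 → ℝ))
    (hΦ : IsRootSystem Φ)
    (hspan : Submodule.span ℝ (Φ : Set (Fin 2 → ℝ)) = ⊤)
    (hirr : IsIrreducibleRS Φ)
    (hpos : Φ = Φplus ∪ Φplus.image (fun α => -α))
    (hdisj : ∀ α ∈ Φplus, -α ∉ Φplus)
    (hΔ : Δ ⊆ Φplus)
    (hsimple : ∀ α ∈ Φplus, ∃ c : (Fin 2 → ℝ) → ℕ,
      α = ∑ δ ∈ Δ, (c δ : ℝ) • δ)
    (h : ℕ) (hcox : 2 * h = Φ.card)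
    (Ψ₀ : Finset (Fin 2 → ℝ)) (hΨsub : Ψ₀ ⊆ Φplus) (hΨne : Ψ₀.Nonempty)
    (hideal : ∀ β ∈ Ψ₀, ∀ α ∈ Φplus,
      (∃ c : (Fin 2 → ℝ) → ℕ, β - α = ∑ δ ∈ Δ, (c δ : ℝ) • δ) → α ∈ Ψ₀)
    (m : ℕ) :
    charPolyAffine 2 ℝ
        (((Φplus ×ˢ Finset.Icc (1 - (m : ℤ)) (m : ℤ)).image fun z => affForm z.1 z.2)
          ∪ (Ψ₀.image fun α => affForm α (-(m : ℤ))))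
      = ((Polynomial.X : Polynomial ℤ) - Polynomial.C (1 + (m : ℤ) * h)) *
        ((Polynomial.X : Polynomial ℤ) - Polynomial.C (((Ψ₀.card : ℤ) - 1) + (m : ℤ) * h)) := by
  obtain ⟨α, β, hd, L, hL, hmem⟩ := classification hΦ hspan hirr
  have hA : ∀ p, p ∈ ((Φplus ×ˢ Finset.Icc (1 - (m : ℤ)) (m : ℤ)).image fun z => affForm z.1 z.2)
      ∪ (Ψ₀.image fun α => affForm α (-(m : ℤ))) ↔
      (∃ v ∈ Φplus, ∃ j : ℤ, 1 - (m : ℤ) ≤ j ∧ j ≤ m ∧ affForm v j = p) ∨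
        ∃ v ∈ Ψ₀, affForm v (-(m : ℤ)) = p := by
    intro p
    simp only [Finset.mem_union, Finset.mem_image, Finset.mem_product, Finset.mem_Icc,
      Prod.exists]
    refine or_congr ⟨?_, ?_⟩ Iff.rfl
    · rintro ⟨v, j, ⟨hv, h1, h2⟩, rfl⟩
      exact ⟨v, hv, j, h1, h2, rfl⟩
    · rintro ⟨v, hv, j, h1, h2, rfl⟩
      exact ⟨v, j, ⟨hv, h1, h2⟩, rfl⟩
  rcases hL with rfl | rfl | rfl
  · exact charPoly_of_type hd goodForms_A (by decide) stageFormula_A signs_A hmem hpos hdisj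
      hsimple h hcox Ψ₀ hΨsub hΨne hideal m _ hA
  · exact charPoly_of_type hd goodForms_B (by decide) stageFormula_B signs_B hmem hpos hdisj
      hsimple h hcox Ψ₀ hΨsub hΨne hideal m _ hA
  · exact charPoly_of_type hd goodForms_G (by decide) stageFormula_G signs_G hmem hpos hdisj
      hsimple h hcox Ψ₀ hΨsub hΨne hideal m _ hA
end
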